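/- arXiv:1403.1802 — 3 statements merged into one kernel-verified Lean document; each statement's English description precedes it below -/
import Mathlib

section
/- Let F be a field of characteristic 2 and let K/F be a field extension with K² ⊆ F (i.e. K/F is purely inseparable of exponent at most 1). Then K/F is excellent for quadratic forms: for every quadratic form q over F there exists an anisotropic quadratic form φ over F such that the anisotropic part of q_K is isometric to φ_K. -/
/-!  A concrete coefficient-matrix model of (possibly singular) finite-dimensional
quadratic forms over a field, suitable for characteristic 2. -/

/-- Coefficient representation of a (finite-dimensional) quadratic form over a field `F`:
the form of dimension `dim` given by `q(x) = ∑ i j, c i j * x i * x j`. -/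
structure QF (F : Type*) [Field F] : Type _ where
  dim : ℕ
  c : Matrix (Fin dim) (Fin dim) F

namespace QF

variable {F E : Type*} [Field F] [Field E]

/-- Evaluation of the quadratic form at a vector. -/
def eval (q : QF F) (x : Fin q.dim → F) : F :=
  ∑ i, ∑ j, q.c i j * x i * x j

/-- Scalar extension (base change) of a quadratic form along a ring homomorphism. -/
def map (f : F →+* E) (q : QF F) : QF E :=
  ⟨q.dim, fun i j => f (q.c i j)⟩

/-- Orthogonal sum. -/
def orthSum (q q' : QF F) : QF F :=
  ⟨q.dim + q'.dim,
    Matrix.reindex finSumFinEquiv finSumFinEquiv (Matrix.fromBlocks q.c 0 0 q'.c)⟩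

/-- Scaling `a • q`. -/
def smul (a : F) (q : QF F) : QF F := ⟨q.dim, a • q.c⟩

/-- The nonsingular binary quadratic form `[a,b] : (x,y) ↦ ax² + xy + by²`. -/
def bin (a b : F) : QF F := ⟨2, !![a, 1; 0, b]⟩

/-- The diagonal (totally singular) quadratic form `⟨a₁, …, aₙ⟩`. -/
def diag {n : ℕ} (v : Fin n → F) : QF F := ⟨n, Matrix.diagonal v⟩

/-- The zero-dimensional quadratic form. -/
def nil : QF F := { dim := 0, c := 0 }

/-- The one-dimensional form `⟨1⟩`. -/
def unit : QF F := diag (fun _ : Fin 1 => (1 : F))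

/-- Orthogonal sum of a list of forms. -/
def sumList (l : List (QF F)) : QF F := l.foldr orthSum nil

/-- `pfTensor [a₁,…,aₙ] q` is the tensor product `⟨⟨a₁,…,aₙ⟩⟩_b ⊗ q` of the bilinear
Pfister form `⟨⟨a₁,…,aₙ⟩⟩_b = ⟨1,a₁⟩_b ⊗ ⋯ ⊗ ⟨1,aₙ⟩_b` with the quadratic form `q`,
via `⟨1,a⟩_b ⊗ q ≅ q ⊥ a·q`. -/
def pfTensor (l : List F) (q : QF F) : QF F :=
  l.foldr (fun a r => orthSum r (smul a r)) q

/-- The hyperbolic plane `ℍ ≅ [0,0]`. -/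
def hypPlane : QF F := bin 0 0

/-- The orthogonal sum of `k` hyperbolic planes. -/
def hyp (k : ℕ) : QF F := sumList (List.replicate k hypPlane)

/-- The `l`-dimensional zero form `⟨0,…,0⟩`. -/
def zeros (l : ℕ) : QF F := diag (fun _ : Fin l => (0 : F))

/-- Isometry of quadratic forms. -/
def Isometric (q q' : QF F) : Prop :=
  ∃ e : (Fin q.dim → F) ≃ₗ[F] (Fin q'.dim → F), ∀ x, q'.eval (e x) = q.eval x

/-- Anisotropy: the form has no nontrivial zero. -/
def Anisotropic (q : QF F) : Prop := ∀ x, q.eval x = 0 → x = 0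

/-- A quadratic form is nonsingular if the radical of its polar form
`B_q(x,y) = q(x+y) - q(x) - q(y)` (with matrix `c + cᵀ`) is trivial. -/
def Nonsingular (q : QF F) : Prop := ∀ x, (q.c + q.c.transpose).mulVec x = 0 → x = 0

/-- A quadratic form is totally singular if its polar form vanishes identically. -/
def TotallySingular (q : QF F) : Prop := q.c + q.c.transpose = 0

/-- A quadratic form is hyperbolic if it is isometric to an orthogonal sum of
hyperbolic planes. -/
def Hyperbolic (q : QF F) : Prop := ∃ k, Isometric q (hyp k)

/-- Witt equivalence: `q ~ q'` iff the anisotropic parts agree, equivalently the two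
forms become isometric after adding suitable numbers of hyperbolic planes and zero
forms. -/
def WittEquiv (q q' : QF F) : Prop :=
  ∃ k k' l l', Isometric (orthSum q (orthSum (hyp k) (zeros l)))
    (orthSum q' (orthSum (hyp k') (zeros l')))

/-- `AnisoPartOf φ q` : `φ` is (isometric to) the anisotropic part of `q`, i.e. `φ` is
anisotropic and `q ≅ k × ℍ ⊥ φ ⊥ ⟨0,…,0⟩`. -/
def AnisoPartOf (φ q : QF F) : Prop :=
  Anisotropic φ ∧ ∃ k l, Isometric q (orthSum (hyp k) (orthSum φ (zeros l)))

/-- `Dominates q' q` means `q ≺ q'`, i.e. `q'` dominates `q`: there is an injective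
linear map `t` of the underlying spaces with `q' ∘ t = q`. -/
def Dominates (q' q : QF F) : Prop :=
  ∃ t : (Fin q.dim → F) →ₗ[F] (Fin q'.dim → F), Function.Injective t ∧
    ∀ x, q'.eval (t x) = q.eval x

/-- The affine quadric polynomial `∑ cᵢⱼ XᵢXⱼ` of a quadratic form. -/
noncomputable def toPoly (q : QF F) : MvPolynomial (Fin q.dim) F :=
  ∑ i, ∑ j, MvPolynomial.C (q.c i j) * (MvPolynomial.X i * MvPolynomial.X j)

/-- The affine coordinate ring of the (reduced) quadric `q = 0`. -/
abbrev CoordRing (q : QF F) : Type _ :=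
  MvPolynomial (Fin q.dim) F ⧸ (Ideal.span {q.toPoly}).radical

/-- The function field of the quadric `q = 0` (assuming the quadric is integral). -/
abbrev FunctionField (q : QF F) [IsDomain (CoordRing q)] : Type _ :=
  FractionRing (CoordRing q)

/-- The canonical ring homomorphism from a base field `F` into the function field of a
quadric defined over an extension field `K` of `F`. -/
noncomputable def toFunctionField {K : Type*} [Field K] [Algebra F K] (q : QF K)
    [IsDomain (CoordRing q)] : F →+* FunctionField q :=
  (algebraMap (CoordRing q) (FunctionField q)).comp
    ((algebraMap K (CoordRing q)).comp (algebraMap F K))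

end QF

namespace QFX
open QF

universe u v

/-- Isometry of functions on modules. -/
def Iso {K : Type*} [Field K] {W W' : Type*} [AddCommGroup W] [Module K W]
    [AddCommGroup W'] [Module K W'] (Q : W → K) (Q' : W' → K) : Prop :=
  ∃ e : W ≃ₗ[K] W', ∀ x, Q' (e x) = Q x

section iso
variable {K : Type*} [Field K] {W W' W'' V V' : Type*} [AddCommGroup W] [Module K W]
    [AddCommGroup W'] [Module K W'] [AddCommGroup W''] [Module K W'']
    [AddCommGroup V] [Module K V] [AddCommGroup V'] [Module K V']

/-- Sum of functions on the product. -/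
def P (Q : W → K) (Q' : V → K) : W × V → K := fun p => Q p.1 + Q' p.2

theorem Iso.refl (Q : W → K) : Iso Q Q := ⟨LinearEquiv.refl K W, fun _ => rfl⟩

theorem Iso.symm {Q : W → K} {Q' : W' → K} (h : Iso Q Q') : Iso Q' Q := by
  obtain ⟨e, he⟩ := h
  exact ⟨e.symm, fun x => by rw [← he]; simp⟩

theorem Iso.trans {Q : W → K} {Q' : W' → K} {Q'' : W'' → K} (h : Iso Q Q') (h' : Iso Q' Q'') :
    Iso Q Q'' := by
  obtain ⟨e, he⟩ := h
  obtain ⟨f, hf⟩ := h'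
  exact ⟨e.trans f, fun x => by simp [hf, he]⟩

theorem Iso.prod {Q : W → K} {Q' : W' → K} {R : V → K} {R' : V' → K}
    (h : Iso Q Q') (h' : Iso R R') : Iso (P Q R) (P Q' R') := by
  obtain ⟨e, he⟩ := h
  obtain ⟨f, hf⟩ := h'
  exact ⟨e.prodCongr f, fun x => by simp [P, hf, he]⟩

theorem Iso.assoc (Q : W → K) (Q' : W' → K) (Q'' : W'' → K) :
    Iso (P (P Q Q') Q'') (P Q (P Q' Q'')) :=
  ⟨LinearEquiv.prodAssoc K W W' W'', fun x => by simp [P, add_assoc]⟩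

theorem Iso.comm (Q : W → K) (Q' : W' → K) : Iso (P Q Q') (P Q' Q) :=
  ⟨LinearEquiv.prodComm K W W', fun x => by simp [P, add_comm]⟩

theorem iso_orthSum (q q' : QF K) : Iso (orthSum q q').eval (P q.eval q'.eval) := by
  refine ⟨(LinearEquiv.funCongrLeft K K finSumFinEquiv).trans
    (LinearEquiv.sumArrowLequivProdArrow _ _ K K), fun x => ?_⟩
  simp only [P, QF.eval]
  change _ = ∑ i : Fin (q.dim + q'.dim), ∑ j : Fin (q.dim + q'.dim), _
  rw [← finSumFinEquiv.sum_comp]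
  simp_rw [← finSumFinEquiv.sum_comp (M := K)]
  simp [orthSum, Fintype.sum_sum_type]
  rfl

theorem map_orthSum {F : Type*} [Field F] (f : F →+* K) (q q' : QF F) :
    (orthSum q q').map f = orthSum (q.map f) (q'.map f) := by
  unfold QF.map orthSum
  congr 1
  ext i j
  obtain ⟨i, rfl⟩ := finSumFinEquiv.surjective i
  obtain ⟨j, rfl⟩ := finSumFinEquiv.surjective j
  rcases i with i | i <;> rcases j with j | j <;> simp <;> rfl

theorem iso_congr_fun {q q' : QF K} (h : q = q') : Iso q.eval q'.eval := by
  subst h; exact Iso.refl _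

/-- function of binary form -/
def B2 (a b : K) : K × K → K := fun p => a * p.1 ^ 2 + p.1 * p.2 + b * p.2 ^ 2

theorem iso_bin (a b : K) : Iso (bin a b).eval (B2 a b) := by
  refine ⟨LinearEquiv.finTwoArrow K K, fun x => ?_⟩
  change Fin 2 → K at x
  simp only [QF.eval]
  change _ = ∑ i : Fin 2, ∑ j : Fin 2, _
  change a * x 0 ^ 2 + x 0 * x 1 + b * x 1 ^ 2 = _
  simp [bin, Fin.sum_univ_two]
  ring

theorem map_bin {F : Type*} [Field F] (f : F →+* K) (a b : F) :
    (bin a b).map f = bin (f a) (f b) := by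
  unfold QF.map bin
  congr 1
  ext i j
  fin_cases i <;> fin_cases j <;> simp

theorem map_diag {F : Type*} [Field F] (f : F →+* K) {n : ℕ} (c : Fin n → F) :
    (diag c).map f = diag (fun i => f (c i)) := by
  unfold QF.map diag
  congr 1
  ext i j
  simp only [Matrix.diagonal_apply]
  split_ifs <;> simp

theorem eval_diag {n : ℕ} (c : Fin n → K) (x : Fin n → K) :
    (diag c).eval x = ∑ i, c i * x i ^ 2 := by
  simp only [QF.eval]
  change ∑ i : Fin n, ∑ j : Fin n, _ = _
  refine Finset.sum_congr rfl fun i _ => ?_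
  rw [Finset.sum_eq_single i]
  · simp [diag]; ring
  · intro j _ hj
    simp [diag, Matrix.diagonal_apply_ne' _ hj]
  · simp

theorem eval_map_diag {F : Type*} [Field F] (f : F →+* K) {n : ℕ} (c : Fin n → F) (x : Fin n → K) :
    ((diag c).map f).eval x = ∑ i, f (c i) * x i ^ 2 := by
  have h : ∀ q : QF K, q = diag (fun i => f (c i)) → ∀ hq : q.dim = n, 
      q.eval (fun i => x (Fin.cast hq i)) = ∑ i, f (c i) * x i ^ 2 := by
    rintro q rfl hq
    exact eval_diag _ x
  exact h _ (map_diag f c) rfl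

theorem iso_hyp_zero_left (Q : W → K) : Iso Q (P (hyp 0 : QF K).eval Q) := by
  have : Unique (Fin (hyp 0 : QF K).dim → K) := 
    (inferInstance : Unique (Fin 0 → K))
  refine ⟨(LinearEquiv.uniqueProd (R := K) (M := W) (M₂ := Fin (hyp 0 : QF K).dim → K)).symm, fun x => ?_⟩
  have : ∀ y, (hyp 0 : QF K).eval y = 0 := fun y => by
    simp only [QF.eval]; exact Finset.sum_eq_zero (fun i _ => Fin.elim0 i)
  simp [P, this]

theorem iso_zeros (l : ℕ) : Iso (zeros l : QF K).eval (fun _ : Fin l → K => (0 : K)) :=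
  ⟨LinearEquiv.refl K _, fun x => by
    unfold zeros; erw [eval_diag]; simp⟩

theorem iso_zeros_zero_right (Q : W → K) : Iso Q (P Q (zeros 0 : QF K).eval) := by
  refine Iso.trans ?_ (Iso.prod (Iso.refl Q) (iso_zeros 0).symm)
  exact ⟨(LinearEquiv.prodUnique (R := K) (M := W) (M₂ := Fin 0 → K)).symm, fun x => by simp [P]⟩

theorem iso_zeros_succ (l : ℕ) : 
    Iso (P (zeros l : QF K).eval (fun _ : K => (0 : K))) (zeros (l + 1) : QF K).eval := by
  refine Iso.trans (Iso.prod (iso_zeros l) (Iso.refl _)) (Iso.trans (Iso.comm _ _) 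
    (Iso.trans ?_ (iso_zeros (l + 1)).symm))
  exact ⟨Fin.consLinearEquiv K (fun _ => K), fun x => by simp [P]⟩

theorem hyp_succ (k : ℕ) : (hyp (k + 1) : QF K) = orthSum (bin 0 0) (hyp k) := rfl

theorem aniso_hyp {φ q q' : QF K} (h : AnisoPartOf φ q') 
    (hi : Iso q.eval (P (B2 0 0) q'.eval)) : AnisoPartOf φ q := by
  obtain ⟨ha, k, l, h⟩ := h
  refine ⟨ha, k + 1, l, ?_⟩
  refine Iso.trans hi (Iso.trans (Iso.prod (iso_bin 0 0).symm h) ?_)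
  refine Iso.trans (Iso.prod (Iso.refl _) (iso_orthSum _ _)) ?_
  refine Iso.trans (Iso.assoc _ _ _).symm (Iso.trans ?_ (iso_orthSum _ _).symm)
  exact Iso.prod (iso_orthSum _ _).symm (Iso.refl _)

theorem aniso_zero {φ q q' : QF K} (h : AnisoPartOf φ q') 
    (hi : Iso q.eval (P q'.eval (fun _ : K => (0 : K)))) : AnisoPartOf φ q := by
  obtain ⟨ha, k, l, h⟩ := h
  refine ⟨ha, k, l + 1, ?_⟩
  refine Iso.trans hi (Iso.trans (Iso.prod h (Iso.refl _)) ?_)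
  refine Iso.trans (Iso.prod (iso_orthSum _ _) (Iso.refl _)) ?_
  refine Iso.trans (Iso.assoc _ _ _) (Iso.trans ?_ (iso_orthSum _ _).symm)
  refine Iso.prod (Iso.refl _) ?_
  refine Iso.trans (Iso.prod (iso_orthSum _ _) (Iso.refl _)) ?_
  refine Iso.trans (Iso.assoc _ _ _) (Iso.trans ?_ (iso_orthSum _ _).symm)
  exact Iso.prod (Iso.refl _) (iso_zeros_succ l)

theorem aniso_self {φ q : QF K} (h : Anisotropic φ) (hi : Iso q.eval φ.eval) : 
    AnisoPartOf φ q := by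
  refine ⟨h, 0, 0, ?_⟩
  refine Iso.trans hi (Iso.trans ?_ (iso_orthSum _ _).symm)
  refine Iso.trans (iso_zeros_zero_right _) (Iso.trans (iso_orthSum _ _).symm ?_)
  exact iso_hyp_zero_left _

end iso

section key
variable {F K : Type*} [Field F] [Field K] {W W' : Type*} [AddCommGroup W] [Module K W]
    [AddCommGroup W'] [Module K W']

/-- normal form -/
def NF (l : List (F × F)) (t : QF F) : QF F := l.foldr (fun p r => orthSum (bin p.1 p.2) r) t

theorem iso_NF_cons (f : F →+* K) (a b : F) (l : List (F × F)) (t : QF F) :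
    Iso ((NF ((a, b) :: l) t).map f).eval (P (B2 (f a) (f b)) ((NF l t).map f).eval) := by
  have : (NF ((a, b) :: l) t).map f = orthSum (bin (f a) (f b)) ((NF l t).map f) := by
    rw [← map_bin, ← map_orthSum]; rfl
  rw [this]
  exact (iso_orthSum _ _).trans (Iso.prod (iso_bin _ _) (Iso.refl _))

/-- Radical vectors. -/
def IsRad (Q : W → K) (w : W) : Prop := ∀ x, Q (x + w) = Q x + Q w

theorem eval_smul (q : QF K) (r : K) (x : Fin q.dim → K) : q.eval (r • x) = r ^ 2 * q.eval x := by
  simp only [QF.eval, Finset.mul_sum, Pi.smul_apply, smul_eq_mul]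
  refine Finset.sum_congr rfl fun i _ => Finset.sum_congr rfl fun j _ => by ring

theorem rad_smul {Q : W → K} (hQ : ∀ (r : K) x, Q (r • x) = r ^ 2 * Q x) {w : W} (h : IsRad Q w)
    (r : K) (x : W) : Q (x + r • w) = Q x + r ^ 2 * Q w := by
  by_cases hr : r = 0
  · simp [hr]
  · have : x + r • w = r • (r⁻¹ • x + w) := by
      rw [smul_add, smul_smul, mul_inv_cancel₀ hr, one_smul]
    rw [this, hQ, h, hQ, mul_add, ← mul_assoc, ← mul_pow, mul_inv_cancel₀ hr]
    simp

/-- Conclusion of the key lemma. -/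
def Con (f : F →+* K) (t : QF F) (n : ℕ) (Q : W → K) (w : W) : Prop :=
  ∃ (a b : F) (l : List (F × F)), l.length + 1 = n ∧
    ∃ e : W ≃ₗ[K] (K × K) × (Fin ((NF l t).map f).dim → K),
      (∀ x, P (B2 (f a) (f b)) ((NF l t).map f).eval (e x) = Q x) ∧ ∃ y, e w = ((1, y), 0)

theorem Con.of_equiv {f : F →+* K} {t : QF F} {n : ℕ} {Q : W → K} {w : W} {Q' : W' → K}
    (e : W ≃ₗ[K] W') (he : ∀ x, Q' (e x) = Q x) (h : Con f t n Q' (e w)) : Con f t n Q w := by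
  obtain ⟨a, b, l, hl, e', he', y, hy⟩ := h
  exact ⟨a, b, l, hl, e.trans e', fun x => by simp [he', he], y, by simp [hy]⟩

/-- rescaling -/
def rescale (x : K) (hx : x ≠ 0) : (K × K) ≃ₗ[K] K × K where
  toFun p := (p.1 / x, p.2 * x)
  invFun p := (p.1 * x, p.2 / x)
  map_add' p q := by ext <;> simp <;> ring
  map_smul' p q := by ext <;> simp <;> ring
  left_inv p := by ext <;> simp [hx]
  right_inv p := by ext <;> simp [hx]

theorem rescale_eval (x : K) (hx : x ≠ 0) (a b : K) (p : K × K) :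
    B2 (a * x ^ 2) (b / x ^ 2) (rescale x hx p) = B2 a b p := by
  simp only [B2, rescale, LinearEquiv.coe_mk, LinearMap.coe_mk, AddHom.coe_mk]
  field_simp

/-- Reduction to first coordinate one. -/
theorem Con.reduce (f : F →+* K) (hK : ∀ x : K, ∃ y : F, f y = x ^ 2) {t : QF F} {n : ℕ}
    {Q : W → K} {w : W}
    (h : ∀ (a b : F) (y : K), Con f t n (P (B2 (f a) (f b)) Q) ((1, y), w))
    (a b : F) (x y : K) (hxy : x ≠ 0 ∨ y ≠ 0) : Con f t n (P (B2 (f a) (f b)) Q) ((x, y), w) := by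
  have key : ∀ (a b : F) (x y : K), x ≠ 0 → Con f t n (P (B2 (f a) (f b)) Q) ((x, y), w) := by
    intro a b x y hx
    obtain ⟨k, hk⟩ := hK x
    refine Con.of_equiv (Q' := P (B2 (f (a * k)) (f (b / k))) Q)
      ((rescale x hx).prodCongr (LinearEquiv.refl K W)) (fun v => ?_) ?_
    · have := rescale_eval x hx (f a) (f b) v.1
      simp only [P, map_mul, map_div₀, hk]
      simpa using this
    · have := h (a * k) (b / k) (y * x)
      simpa [rescale, hx] using this
  rcases hxy with hx | hy
  · exact key a b x y hx
  · refine Con.of_equiv (Q' := P (B2 (f b) (f a)) Q)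
      ((LinearEquiv.prodComm K K K).prodCongr (LinearEquiv.refl K W)) (fun v => ?_) ?_
    · simp [P, B2]; ring
    · exact key b a y x hy

/-- transformation in the radical case -/
def radEquiv (w : W) : ((K × K) × W) ≃ₗ[K] (K × K) × W where
  toFun p := (p.1, p.2 - p.1.1 • w)
  invFun p := (p.1, p.2 + p.1.1 • w)
  map_add' p q := by ext <;> simp; module
  map_smul' p q := by ext <;> simp; module
  left_inv p := by ext <;> simp
  right_inv p := by ext <;> simp

theorem con_rad (f : F →+* K) (hK : ∀ x : K, ∃ y : F, f y = x ^ 2) {t : QF F} (l : List (F × F))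
    (w : Fin ((NF l t).map f).dim → K) (hw : IsRad ((NF l t).map f).eval w)
    (hd : ∃ d : F, f d = ((NF l t).map f).eval w)
    (a b : F) (x y : K) (hxy : x ≠ 0 ∨ y ≠ 0) :
    Con f t (l.length + 1) (P (B2 (f a) (f b)) ((NF l t).map f).eval) ((x, y), w) := by
  refine Con.reduce f hK (fun a b y => ?_) a b x y hxy
  obtain ⟨d, hd⟩ := hd
  refine ⟨a + d, b, l, rfl, radEquiv w, fun v => ?_, y, ?_⟩
  · have h := rad_smul (eval_smul _) hw v.1.1 (v.2 - v.1.1 • w)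
    rw [sub_add_cancel] at h
    simp only [P, h, map_add, hd, radEquiv, B2, LinearEquiv.coe_mk, LinearMap.coe_mk, AddHom.coe_mk]
    ring
  · simp [radEquiv]

/-- transformation in the main case -/
def mainEquiv (z : K) : ((K × K) × (K × K) × W) ≃ₗ[K] (K × K) × (K × K) × W where
  toFun v := ((v.1.1, v.1.1 * z + v.1.2 - v.2.1.1 * z - v.2.1.2),
    (v.2.1.1 - v.1.1, v.2.1.2 - v.1.1 * z), v.2.2)
  invFun v := ((v.1.1, v.1.2 + v.2.1.1 * z + v.2.1.2 + v.1.1 * z),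
    (v.2.1.1 + v.1.1, v.2.1.2 + v.1.1 * z), v.2.2)
  map_add' p q := by ext <;> simp <;> ring
  map_smul' p q := by ext <;> simp <;> ring
  left_inv p := by ext <;> simp; ring
  right_inv p := by ext <;> simp; ring

/-- swapping the planes -/
def swapEquiv : ((K × K) × (K × K) × W) ≃ₗ[K] (K × K) × (K × K) × W where
  toFun v := (v.2.1, v.1, v.2.2)
  invFun v := (v.2.1, v.1, v.2.2)
  map_add' p q := rfl
  map_smul' p q := rfl
  left_inv p := rfl
  right_inv p := rfl

theorem con_main (f : F →+* K) (hK : ∀ x : K, ∃ y : F, f y = x ^ 2) (h2 : (2 : K) = 0)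
    {t : QF F} {n : ℕ} {Q : W → K} {w : W} (h : Con f t n Q w)
    (a b : F) (x y : K) :
    Con f t (n + 1) (P (B2 (f a) (f b)) Q) ((x, y), w) := by
  obtain ⟨a', b', l, hl, e, he, z, hz⟩ := h
  refine Con.of_equiv (Q' := P (B2 (f a) (f b)) (P (B2 (f a') (f b')) ((NF l t).map f).eval))
    ((LinearEquiv.refl K (K × K)).prodCongr e) (fun v => by simp [P, ← he]) ?_
  simp only [LinearEquiv.prodCongr_apply, hz, LinearEquiv.refl_apply]
  by_cases hxy : x ≠ 0 ∨ y ≠ 0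
  · refine Con.reduce f hK (fun a b y => ?_) a b x y hxy
    obtain ⟨k, hk⟩ := hK z
    obtain ⟨e', he'⟩ := (iso_NF_cons f (a' + k * b) (b + b') l t).symm
    refine ⟨a + a' + k * (b + b'), b, (a' + k * b, b + b') :: l, by simp [← hl],
      (mainEquiv z).trans ((LinearEquiv.refl K (K × K)).prodCongr e'), fun v => ?_, y - z - z + z, ?_⟩
    · simp only [LinearEquiv.trans_apply, LinearEquiv.prodCongr_apply, P, he',
        LinearEquiv.refl_apply]
      simp only [mainEquiv, B2, LinearEquiv.coe_mk, LinearMap.coe_mk, AddHom.coe_mk,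
        map_add, map_mul, hk]
      grind
    · simp [mainEquiv]
  · push Not at hxy
    obtain ⟨rfl, rfl⟩ := hxy
    obtain ⟨e', he'⟩ := (iso_NF_cons f a b l t).symm
    refine ⟨a', b', (a, b) :: l, by simp [← hl], 
      swapEquiv.trans ((LinearEquiv.refl K (K × K)).prodCongr e'), fun v => ?_, z, ?_⟩
    · simp [P, he', swapEquiv]; ring
    · simp [swapEquiv]

theorem key (f : F →+* K) (hK : ∀ x : K, ∃ y : F, f y = x ^ 2) (h2 : (2 : K) = 0)
    {s : ℕ} (c : Fin s → F) (l : List (F × F)) (w : Fin ((NF l (diag c)).map f).dim → K) :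
    (IsRad ((NF l (diag c)).map f).eval w ∧ ∃ d : F, f d = ((NF l (diag c)).map f).eval w) ∨
    Con f (diag c) l.length ((NF l (diag c)).map f).eval w := by
  induction l with
  | nil =>
    left
    change Fin s → K at w
    change IsRad ((diag c).map f).eval w ∧ ∃ d : F, f d = ((diag c).map f).eval w
    constructor
    · intro x
      change Fin s → K at x
      erw [eval_map_diag, eval_map_diag, eval_map_diag]
      rw [← Finset.sum_add_distrib]
      refine Finset.sum_congr rfl fun i _ => ?_
      change f (c i) * (x i + w i) ^ 2 = _
      linear_combination f (c i) * x i * w i * h2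
    · choose g hg using hK
      refine ⟨∑ i, c i * g (w i), ?_⟩
      erw [eval_map_diag]
      simp [hg]
  | cons p l ih =>
    obtain ⟨a, b⟩ := p
    obtain ⟨e, he⟩ := iso_NF_cons f a b l (diag c)
    obtain ⟨⟨⟨x, y⟩, w'⟩, hw⟩ : ∃ v, v = e w := ⟨_, rfl⟩
    by_cases hxy : x ≠ 0 ∨ y ≠ 0
    · right
      refine Con.of_equiv e he ?_
      rw [← hw]
      rcases ih w' with ⟨h, hd⟩ | h
      · exact con_rad f hK l w' h hd a b x y hxy
      · exact con_main f hK h2 h a b x y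
    · rcases ih w' with ⟨h, hd⟩ | h
      · left
        push Not at hxy
        obtain ⟨rfl, rfl⟩ := hxy
        constructor
        · intro v
          rw [← he, ← he, ← he, map_add, ← hw]
          simp only [P, Prod.snd_add, Prod.fst_add, h (e v).2]
          simp [B2, add_assoc]
        · rw [← he, ← hw]
          simpa [P, B2] using hd
      · right
        refine Con.of_equiv e he ?_
        rw [← hw]
        exact con_main f hK h2 h a b x y

end key

section red
variable {F K : Type*} [Field F] [Field K]

/-- eliminating a coordinate -/
def elimEquiv {m : ℕ} (j : Fin (m + 1)) (z : Fin (m + 1) → K) :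
    (Fin (m + 1) → K) ≃ₗ[K] (Fin m → K) × K where
  toFun x := (fun i => x (j.succAbove i) - x j * (z (j.succAbove i) / z j), x j)
  invFun u := j.insertNth u.2 (fun i => u.1 i + u.2 * (z (j.succAbove i) / z j))
  map_add' x y := by
    ext i <;> simp
    ring
  map_smul' x y := by
    ext i <;> simp
    ring
  left_inv x := by
    ext i
    induction i using Fin.succAboveCases j <;> simp
  right_inv x := by
    ext i <;> simp

theorem rad_red (f : F →+* K) (h2 : (2 : K) = 0) {s : ℕ} (c : Fin s → F) (l : List (F × F))
    (w : Fin ((NF l (diag c)).map f).dim → K) (hw : IsRad ((NF l (diag c)).map f).eval w)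
    (h0 : ((NF l (diag c)).map f).eval w = 0) (hne : w ≠ 0) :
    ∃ (m : ℕ) (c' : Fin m → F), m + 1 = s ∧
      Iso ((NF l (diag c)).map f).eval (P ((NF l (diag c')).map f).eval (fun _ : K => (0 : K))) := by
  induction l with
  | nil =>
    change Fin s → K at w
    obtain ⟨j, hj⟩ := Function.ne_iff.1 hne
    change Fin s at j
    change w j ≠ 0 at hj
    rcases s with _ | m
    · exact Fin.elim0 j
    refine ⟨m, fun i => c (j.succAbove i), rfl, elimEquiv j w, fun x => ?_⟩
    change Fin (m + 1) → K at x
    have h0' : ∑ i, f (c i) * w i ^ 2 = 0 := by rw [← eval_map_diag]; exact h0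
    change ((diag fun i => c (j.succAbove i)).map f).eval (elimEquiv j w x).1 + 0
      = ((diag c).map f).eval x
    erw [eval_map_diag, eval_map_diag]
    rw [Fin.sum_univ_succAbove _ j] at h0' ⊢
    have h1 : f (c j) = (∑ i, f (c (j.succAbove i)) * w (j.succAbove i) ^ 2) / w j ^ 2 := by
      field_simp
      linear_combination h0' - h2 * (∑ i, f (c (j.succAbove i)) * w (j.succAbove i) ^ 2)
    rw [h1, add_zero, Finset.sum_div, Finset.sum_mul, ← Finset.sum_add_distrib]
    refine Finset.sum_congr rfl fun i _ => ?_
    simp only [elimEquiv, LinearEquiv.coe_mk, LinearMap.coe_mk, AddHom.coe_mk]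
    linear_combination - h2 * f (c (j.succAbove i)) * (x (j.succAbove i)) * x j * (w (j.succAbove i) / w j)
  | cons p l ih =>
    obtain ⟨a, b⟩ := p
    have hI := iso_NF_cons f a b l (diag c)
    obtain ⟨e, he⟩ := hI
    obtain ⟨⟨⟨x, y⟩, w'⟩, hw'⟩ : ∃ v, v = e w := ⟨_, rfl⟩
    have hr : IsRad (P (B2 (f a) (f b)) ((NF l (diag c)).map f).eval) ((x, y), w') := by
      intro v
      obtain ⟨v, rfl⟩ := e.surjective v
      rw [hw', ← map_add, he, he, he, hw]
    have hz : ((NF l (diag c)).map f).eval 0 = 0 := by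
      simpa using eval_smul ((NF l (diag c)).map f) 0 0
    have hy : y = 0 := by
      have := hr ((1, 0), 0)
      simp [P, B2, hz] at this
      linear_combination this - h2 * f a * x
    have hx : x = 0 := by
      have := hr ((0, 1), 0)
      simp [P, B2, hz] at this
      linear_combination this - h2 * f b * y
    subst hx hy
    have hr' : IsRad ((NF l (diag c)).map f).eval w' := by
      intro v
      have := hr ((0, 0), v)
      simpa [P, B2] using this
    have h0' : ((NF l (diag c)).map f).eval w' = 0 := by
      rw [← he, ← hw'] at h0
      simpa [P, B2] using h0
    have hne' : w' ≠ 0 := by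
      rintro rfl
      apply hne
      apply e.injective
      rw [← hw', map_zero]; rfl
    obtain ⟨m, c', hm, h⟩ := ih w' hr' h0' hne'
    refine ⟨m, c', hm, Iso.trans (iso_NF_cons f a b l (diag c)) ?_⟩
    refine Iso.trans (Iso.prod (Iso.refl _) h) (Iso.trans (Iso.assoc _ _ _).symm ?_)
    exact Iso.prod (iso_NF_cons f a b l (diag c')).symm (Iso.refl _)

/-- isotropic plane is hyperbolic -/
def hypEquiv (b y : K) : (K × K) ≃ₗ[K] K × K where
  toFun p := (p.2 - p.1 * y, p.1 + b * (p.2 - p.1 * y))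
  invFun p := (p.2 - b * p.1, p.1 + (p.2 - b * p.1) * y)
  map_add' p q := by ext <;> simp <;> ring
  map_smul' p q := by ext <;> simp <;> ring
  left_inv p := by ext <;> simp
  right_inv p := by ext <;> simp

theorem hyp_iso (h2 : (2 : K) = 0) (a b y : K) (h : B2 a b (1, y) = 0) :
    Iso (B2 a b) (B2 0 0 : K × K → K) := by
  refine ⟨hypEquiv b y, fun p => ?_⟩
  simp only [B2, hypEquiv, LinearEquiv.coe_mk, LinearMap.coe_mk, AddHom.coe_mk] at h ⊢
  grind

theorem main_NF (f : F →+* K) (hK : ∀ x : K, ∃ y : F, f y = x ^ 2) (h2 : (2 : K) = 0) (n : ℕ) :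
    ∀ {s : ℕ} (c : Fin s → F) (l : List (F × F)), l.length + s = n →
    ∃ φ : QF F, AnisoPartOf (φ.map f) ((NF l (diag c)).map f) := by
  induction n using Nat.strong_induction_on with
  | _ n ih =>
  intro s c l hn
  by_cases ha : Anisotropic ((NF l (diag c)).map f)
  · exact ⟨_, aniso_self ha (Iso.refl _)⟩
  · unfold Anisotropic at ha
    push Not at ha
    obtain ⟨w, h0, hne⟩ := ha
    rcases key f hK h2 c l w with ⟨hr, -⟩ | ⟨a, b, l', hl, e, he, y, hy⟩
    · obtain ⟨m, c', hm, hi⟩ := rad_red f h2 c l w hr h0 hne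
      obtain ⟨φ, hφ⟩ := ih (l.length + m) (by omega) c' l rfl
      exact ⟨φ, aniso_zero hφ hi⟩
    · obtain ⟨φ, hφ⟩ := ih (l'.length + s) (by omega) c l' rfl
      refine ⟨φ, aniso_hyp hφ (Iso.trans ⟨e, he⟩ (Iso.prod (hyp_iso h2 _ _ y ?_) (Iso.refl _)))⟩
      have hz : ((NF l' (diag c)).map f).eval 0 = 0 := by
        simpa using eval_smul ((NF l' (diag c)).map f) 0 0
      rw [← he, hy] at h0
      simpa [P, hz] using h0

end red

section normal
variable {F K : Type*} [Field F] [Field K]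

/-- Mathlib quadratic form of a coefficient form. -/
noncomputable def toQ (q : QF F) : QuadraticForm F (Fin q.dim → F) :=
  Matrix.toQuadraticForm' q.c

theorem toQ_apply (q : QF F) (x : Fin q.dim → F) : toQ q x = q.eval x := by
  unfold toQ Matrix.toQuadraticForm'
  rw [LinearMap.BilinMap.toQuadraticMap_apply, Matrix.toLinearMap₂'_apply]
  unfold QF.eval
  refine Finset.sum_congr rfl fun i _ => Finset.sum_congr rfl fun j _ => ?_
  simp only [smul_eq_mul]
  ring

theorem additive_sum {W : Type*} [AddCommGroup W] [Module F W] (Q : QuadraticForm F W)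
    (h : ∀ x y, QuadraticMap.polar Q x y = 0) {ι : Type*} (s : Finset ι) (v : ι → W) :
    Q (∑ i ∈ s, v i) = ∑ i ∈ s, Q (v i) := by
  classical
  induction s using Finset.induction_on with
  | empty => simp
  | insert i s hi ih =>
    rw [Finset.sum_insert hi, Finset.sum_insert hi, QuadraticMap.map_add Q, h, ih, add_zero]

theorem normal_aux {W : Type*} [AddCommGroup W] [Module F W] (h2 : (2 : F) = 0)
    (Q : QuadraticForm F W)
    (e g : W) (heg : QuadraticMap.polar Q e g = 1) : 
    Iso Q (P (B2 (Q e) (Q g)) (fun x : ((QuadraticMap.polarBilin Q e).ker ⊓ 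
      (QuadraticMap.polarBilin Q g).ker : Submodule F W) => Q x)) := by
  have hge : QuadraticMap.polar Q g e = 1 := by rw [QuadraticMap.polar_comm, heg]
  have hee : QuadraticMap.polar Q e e = 0 := by
    rw [QuadraticMap.polar_self, two_nsmul]; linear_combination h2 * Q e
  have hgg : QuadraticMap.polar Q g g = 0 := by
    rw [QuadraticMap.polar_self, two_nsmul]; linear_combination h2 * Q g
  apply Iso.symm
  have hmem : ∀ w, w - QuadraticMap.polarBilin Q g w • e - QuadraticMap.polarBilin Q e w • g ∈
      ((QuadraticMap.polarBilin Q e).ker ⊓ (QuadraticMap.polarBilin Q g).ker : Submodule F W) := by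
    intro w
    constructor
    · simp [heg, h2]
    · simp [hge, h2]
  refine ⟨
    { toFun := fun p => p.1.1 • e + p.1.2 • g + p.2
      invFun := fun w => ((QuadraticMap.polarBilin Q g w, QuadraticMap.polarBilin Q e w),
        ⟨w - QuadraticMap.polarBilin Q g w • e - QuadraticMap.polarBilin Q e w • g, hmem w⟩)
      map_add' := fun p q => ?_
      map_smul' := fun p q => ?_
      left_inv := fun p => ?_
      right_inv := fun w => ?_ }, fun p => ?_⟩
  · simp; module
  · simp; module
  · obtain ⟨⟨x, y⟩, u, hu1, hu2⟩ := p
    have hu1' : QuadraticMap.polar Q e u = 0 := by simpa using hu1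
    have hu2' : QuadraticMap.polar Q g u = 0 := by simpa using hu2
    ext <;> simp [heg, hge, h2, hu1', hu2']
    abel
  · simp
  · obtain ⟨⟨x, y⟩, u, hu1, hu2⟩ := p
    have hu1' : QuadraticMap.polar Q e u = 0 := by simpa using hu1
    have hu2' : QuadraticMap.polar Q g u = 0 := by simpa using hu2
    simp [QuadraticMap.map_add Q, QuadraticMap.polar_add_left, QuadraticMap.map_smul, 
      QuadraticMap.polar_smul_left, QuadraticMap.polar_smul_right, heg, hu1', hu2', P, B2]
    ring

theorem normal {W : Type*} [AddCommGroup W] [Module F W] [FiniteDimensional F W] (h2 : (2 : F) = 0)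
    (Q : QuadraticForm F W) :
    ∃ (l : List (F × F)) (s : ℕ) (c : Fin s → F), Iso Q (NF l (diag c)).eval := by
  obtain ⟨n, hn⟩ : ∃ n, n = Module.finrank F W := ⟨_, rfl⟩
  induction n using Nat.strong_induction_on generalizing W with
  | _ n ih =>
  by_cases hp : ∀ x y, QuadraticMap.polar Q x y = 0
  · let b := Module.finBasis F W
    refine ⟨[], _, fun i => Q (b i), b.equivFun, fun x => ?_⟩
    change (diag (fun i => Q (b i))).eval (b.equivFun x) = _
    erw [eval_diag]
    conv_rhs => rw [← b.sum_equivFun x, additive_sum Q hp]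
    refine Finset.sum_congr rfl fun i _ => ?_
    rw [QuadraticMap.map_smul]
    simp
    ring
  · push Not at hp
    obtain ⟨e, g, heg⟩ := hp
    have h1 : QuadraticMap.polar Q e ((QuadraticMap.polar Q e g)⁻¹ • g) = 1 := by
      rw [QuadraticMap.polar_smul_right, smul_eq_mul, inv_mul_cancel₀ heg]
    have hI := normal_aux h2 Q e _ h1
    generalize (QuadraticMap.polar Q e g)⁻¹ • g = g' at *
    generalize hW : (QuadraticMap.polarBilin Q e).ker ⊓ 
      (QuadraticMap.polarBilin Q g').ker = W' at *
    have hlt : Module.finrank F W' < n := by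
      obtain ⟨E, -⟩ := hI
      have := E.finrank_eq
      simp at this
      omega
    obtain ⟨l, s, c, h⟩ := ih _ hlt (Q.comp W'.subtype) rfl
    refine ⟨(Q e, Q g') :: l, s, c, Iso.trans hI ?_⟩
    refine Iso.trans (Iso.prod (Iso.refl _) ?_) (iso_NF_cons (RingHom.id F) _ _ _ _).symm
    exact h

theorem quad_zero (f : F →+* K) {n : ℕ} (D : QuadraticForm K (Fin n → K))
    (h : ∀ x : Fin n → F, D (fun i => f (x i)) = 0) : D = 0 := by
  have hs : ∀ i, D (Pi.single i 1) = 0 := fun i => by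
    rw [← h (Pi.single i 1)]
    congr 1
    ext j
    by_cases hj : j = i
    · subst hj; simp
    · simp [hj]
  have hss : ∀ i j, D (Pi.single i 1 + Pi.single j 1) = 0 := fun i j => by
    rw [← h (Pi.single i 1 + Pi.single j 1)]
    congr 1
    ext k
    simp only [Pi.add_apply, map_add, Pi.single_apply]
    split_ifs <;> simp
  have hB : QuadraticMap.polarBilin D = 0 := by
    refine (Pi.basisFun K (Fin n)).ext fun i => (Pi.basisFun K (Fin n)).ext fun j => ?_
    simp [QuadraticMap.polar, hs, hss]
  have hp : ∀ x y, QuadraticMap.polar D x y = 0 := fun x y => by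
    rw [← QuadraticMap.polarBilin_apply_apply, hB]; rfl
  ext x
  have : x = ∑ i, x i • (Pi.single i 1 : Fin n → K) := by
    simpa using ((Pi.basisFun K (Fin n)).sum_repr x).symm
  rw [this, additive_sum D hp]
  simp [QuadraticMap.map_smul, hs]

theorem eval_map (f : F →+* K) (q : QF F) (x : Fin q.dim → F) :
    (q.map f).eval (fun i => f (x i)) = f (q.eval x) := by
  simp [QF.eval, QF.map]
  rfl

theorem base_change (f : F →+* K) {q q' : QF F} (h : Iso q.eval q'.eval) :
    Iso (q.map f).eval (q'.map f).eval := by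
  obtain ⟨e, he⟩ := h
  let M := LinearMap.toMatrix' (e : (Fin q.dim → F) →ₗ[F] (Fin q'.dim → F))
  let N := LinearMap.toMatrix' (e.symm : (Fin q'.dim → F) →ₗ[F] (Fin q.dim → F))
  have hMN : M * N = 1 := by
    simp only [M, N]; rw [← LinearMap.toMatrix'_comp]; simp
  have hNM : N * M = 1 := by
    simp only [M, N]; rw [← LinearMap.toMatrix'_comp]; simp
  have hMN' : M.map f * N.map f = 1 := by
    rw [← Matrix.map_mul, hMN]; simp
  have hNM' : N.map f * M.map f = 1 := by
    rw [← Matrix.map_mul, hNM]; simp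
  let E : (Fin q.dim → K) ≃ₗ[K] (Fin q'.dim → K) := Matrix.toLin'OfInv hNM' hMN'
  have hE : ∀ x : Fin q.dim → F, E (fun i => f (x i)) = fun i => f (e x i) := by
    intro x
    have h1 : e x = M.mulVec x := by
      rw [← Matrix.toLin'_apply]; simp [M]
    rw [h1]
    ext i
    change (M.map f).mulVec (fun i => f (x i)) i = _
    simp [Matrix.mulVec, dotProduct]
  let T : QuadraticForm K (Fin q.dim → K) := toQ (q.map f)
  let T' : QuadraticForm K (Fin q'.dim → K) := toQ (q'.map f)
  have hT : ∀ x, T x = (q.map f).eval x := toQ_apply (q.map f)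
  have hT' : ∀ x, T' x = (q'.map f).eval x := toQ_apply (q'.map f)
  have hz := quad_zero f (T'.comp (E : (Fin q.dim → K) →ₗ[K] (Fin q'.dim → K)) - T) (fun x => by
      change T' (E _) - T _ = 0
      have h1 : T' (fun i => f (e x i)) = f (q'.eval (e x)) := (hT' _).trans (eval_map f q' (e x))
      have h2 : T (fun i => f (x i)) = f (q.eval x) := (hT _).trans (eval_map f q x)
      rw [hE, h1, h2, he, sub_self])
  refine ⟨E, fun x => ?_⟩
  have := congrArg (fun D : QuadraticForm K (Fin q.dim → K) => D x) hz
  change T' (E x) - T x = 0 at this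
  exact (hT' _).symm.trans ((sub_eq_zero.1 this).trans (hT _))

end normal

theorem final {F K : Type*} [Field F] [Field K] [Algebra F K] [CharP F 2]
    (hK : ∀ x : K, ∃ y : F, algebraMap F K y = x ^ 2) (q : QF F) :
    ∃ φ : QF F, φ.Anisotropic ∧
      AnisoPartOf (φ.map (algebraMap F K)) (q.map (algebraMap F K)) := by
  have h2 : (2 : F) = 0 := CharTwo.two_eq_zero
  have h2' : (2 : K) = 0 := by
    have := congrArg (algebraMap F K) h2
    rwa [map_ofNat, map_zero] at this
  obtain ⟨l, s, c, h⟩ := normal h2 (toQ q)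
  have h' : Iso q.eval (NF l (diag c)).eval := by
    obtain ⟨e, he⟩ := h
    exact ⟨e, fun x => by rw [he, toQ_apply]⟩
  obtain ⟨φ, ha, k, m, hφ⟩ := main_NF (algebraMap F K) hK h2' _ c l rfl
  refine ⟨φ, fun x hx => ?_, ha, k, m, Iso.trans (base_change (algebraMap F K) h') hφ⟩
  have h1 := ha (fun i => algebraMap F K (x i)) (by erw [eval_map, hx, map_zero])
  ext i
  have h3 := congrFun h1 i
  exact (map_eq_zero (algebraMap F K)).1 h3

end QFX

open QF in
/-- Let `F` be a field of characteristic 2 and `K/F` a field extension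
with `K² ⊆ F`.  Then `K/F` is excellent for quadratic forms: for every quadratic form `q`
over `F` there is an anisotropic quadratic form `φ` over `F` whose extension `φ_K` is
(isometric to) the anisotropic part of `q_K`. -/
theorem excellence_of_exponent_one_extension
    (F K : Type*) [Field F] [Field K] [Algebra F K] [CharP F 2]
    (hK : ∀ x : K, ∃ y : F, algebraMap F K y = x ^ 2)
    (q : QF F) :
    ∃ φ : QF F, φ.Anisotropic ∧
      AnisoPartOf (φ.map (algebraMap F K)) (q.map (algebraMap F K)) := by
  exact QFX.final hK q
end

section
/- Let F be a field of characteristic 2 and let K/F be a field extension with K² ⊆ F. Then the Witt kernel W_q(K/F) equals Σ_{t∈K*²} ⟨1,t⟩_b ⊗ W_q(F), the subgroup of W_q(F) generated by all forms ⟨1,t⟩_b ⊗ q with t a nonzero square of an element of K (hence t ∈ F*) and q a nonsingular quadratic form over F. -/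
namespace WK
open QF

/-- Isometry of quadratic functions on arbitrary spaces. -/
def Iso {F : Type*} [Field F] {V V' : Type*} [AddCommGroup V] [Module F V] [AddCommGroup V']
    [Module F V'] (Q : V → F) (Q' : V' → F) : Prop :=
  ∃ e : V ≃ₗ[F] V', ∀ x, Q' (e x) = Q x

section iso
variable {F : Type*} [Field F] {V V' V'' U U' : Type*} [AddCommGroup V] [Module F V]
  [AddCommGroup V'] [Module F V'] [AddCommGroup V''] [Module F V'']
  [AddCommGroup U] [Module F U] [AddCommGroup U'] [Module F U']

/-- orthogonal sum of quadratic functions -/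
def osum (Q : V → F) (Q' : V' → F) : V × V' → F := fun p => Q p.1 + Q' p.2

theorem Iso.refl (Q : V → F) : Iso (F := F) Q Q := ⟨LinearEquiv.refl _ _, fun _ => rfl⟩

theorem Iso.symm {Q : V → F} {Q' : V' → F} (h : Iso (F := F) Q Q') : Iso (F := F) Q' Q := by
  obtain ⟨e, he⟩ := h
  exact ⟨e.symm, fun x => by rw [← he]; simp⟩

theorem Iso.trans {Q : V → F} {Q' : V' → F} {Q'' : V'' → F} (h : Iso (F := F) Q Q')
    (h' : Iso (F := F) Q' Q'') : Iso (F := F) Q Q'' := by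
  obtain ⟨e, he⟩ := h
  obtain ⟨e', he'⟩ := h'
  exact ⟨e.trans e', fun x => by simp [he, he']⟩

theorem Iso.osum {Q : V → F} {Q' : V' → F} {R : U → F} {R' : U' → F} (h : Iso (F := F) Q Q')
    (h' : Iso (F := F) R R') : Iso (F := F) (osum Q R) (osum Q' R') := by
  obtain ⟨e, he⟩ := h
  obtain ⟨e', he'⟩ := h'
  exact ⟨e.prodCongr e', fun x => by simp [WK.osum, he, he']⟩

theorem iso_comm (Q : V → F) (Q' : V' → F) : Iso (F := F) (osum Q Q') (osum Q' Q) :=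
  ⟨LinearEquiv.prodComm F V V', fun x => by simp [osum, add_comm]⟩

theorem iso_assoc (Q : V → F) (Q' : V' → F) (Q'' : V'' → F) :
    Iso (F := F) (osum (osum Q Q') Q'') (osum Q (osum Q' Q'')) :=
  ⟨LinearEquiv.prodAssoc F V V' V'', fun x => by simp [osum, add_assoc]⟩

theorem iso_orthSum (q q' : QF F) : Iso (F := F) (orthSum q q').eval (osum q.eval q'.eval) := by
  let E : ((Fin q.dim → F) × (Fin q'.dim → F)) ≃ₗ[F] (Fin (q.dim + q'.dim) → F) :=
    (LinearEquiv.sumArrowLequivProdArrow _ _ F F).symm.trans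
      (LinearEquiv.funCongrLeft F F finSumFinEquiv.symm)
  have h1 : ∀ x i, E x (Fin.castAdd q'.dim i) = x.1 i := fun x i => by
    simp [E, LinearEquiv.funCongrLeft, LinearMap.funLeft]
    rfl
  have h2 : ∀ x i, E x (Fin.natAdd q.dim i) = x.2 i := fun x i => by
    simp [E, LinearEquiv.funCongrLeft, LinearMap.funLeft]
    rfl
  refine Iso.symm ⟨E, fun x => ?_⟩
  unfold QF.eval osum
  change (∑ i : Fin (q.dim + q'.dim), ∑ j : Fin (q.dim + q'.dim), _) = _
  rw [← finSumFinEquiv.sum_comp]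
  simp_rw [← finSumFinEquiv.sum_comp (fun j : Fin (q.dim + q'.dim) => _)]
  simp only [Fintype.sum_sum_type]
  simp [orthSum]
  refine congrArg₂ (· + ·) (Finset.sum_congr rfl fun i _ => Finset.sum_congr rfl fun j _ => ?_)
    (Finset.sum_congr rfl fun i _ => Finset.sum_congr rfl fun j _ => ?_)
  · exact congrArg₂ (· * ·) (congrArg (q.c i j * ·) (h1 x i)) (h1 x j)
  · exact congrArg₂ (· * ·) (congrArg (q'.c i j * ·) (h2 x i)) (h2 x j)

theorem iso_nil (q : QF F) : Iso (F := F) (osum q.eval (nil (F := F)).eval) q.eval := by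
  have : Unique (Fin (nil (F := F)).dim → F) := inferInstanceAs (Unique (Fin 0 → F))
  exact ⟨LinearEquiv.prodUnique, fun x => by
    have h : (LinearEquiv.prodUnique (R := F) (M := Fin q.dim → F) x) = x.1 := rfl
    rw [h]; simp [osum, QF.eval, nil]⟩

/-- the binary form on `F × F` -/
def bq (a b : F) : F × F → F := fun p => a * p.1 ^ 2 + p.1 * p.2 + b * p.2 ^ 2

theorem iso_bin (a b : F) : Iso (F := F) (bin a b).eval (bq a b) :=
  ⟨LinearEquiv.finTwoArrow F F, fun x => by
    unfold QF.eval bin at *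
    simp [bq, LinearEquiv.finTwoArrow, Fin.sum_univ_two]; ring⟩

/-- sum of binary forms on `Fin n → F × F` -/
def pq {n : ℕ} (a b : Fin n → F) : (Fin n → F × F) → F := fun v => ∑ i, bq (a i) (b i) (v i)

/-- sum of binary forms as a `QF` -/
def pf {n : ℕ} (a b : Fin n → F) : QF F := sumList (List.ofFn fun i => bin (a i) (b i))

theorem iso_pq_succ {n : ℕ} (a b : Fin (n+1) → F) :
    Iso (F := F) (osum (bq (a 0) (b 0)) (pq (fun i => a i.succ) (fun i => b i.succ))) (pq a b) :=
  ⟨Fin.consLinearEquiv F (fun _ => F × F), fun x => by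
    simp [osum, pq, Fin.sum_univ_succ]⟩

theorem iso_pf {n : ℕ} (a b : Fin n → F) : Iso (F := F) (pf a b).eval (pq a b) := by
  induction n with
  | zero =>
    have : Unique (Fin (pf a b).dim → F) := inferInstanceAs (Unique (Fin 0 → F))
    have : IsEmpty (Fin (pf a b).dim) := inferInstanceAs (IsEmpty (Fin 0))
    exact ⟨0, fun x => by simp [pq, QF.eval]⟩
  | succ n ih =>
    have h : pf a b = orthSum (bin (a 0) (b 0)) (pf (fun i => a i.succ) (fun i => b i.succ)) := by
      simp [pf, sumList, List.ofFn_succ]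
    rw [h]
    exact (iso_orthSum _ _).trans (((iso_bin _ _).osum (ih _ _)).trans (iso_pq_succ a b))

theorem hyp_eq (k : ℕ) : hyp (F := F) k = pf (fun _ : Fin k => (0:F)) (fun _ => 0) := by
  simp [hyp, pf, hypPlane]

theorem iso_hyp (k : ℕ) : Iso (F := F) (hyp (F := F) k).eval
    (pq (fun _ : Fin k => (0:F)) (fun _ => 0)) := by
  rw [hyp_eq]; exact iso_pf _ _

theorem zeros_eval (l : ℕ) (x) : (zeros (F := F) l).eval x = 0 := by
  simp [QF.eval, zeros, diag]

theorem pq_congr {n : ℕ} {a b c d : Fin n → F}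
    (h : ∀ i, Iso (F := F) (bq (a i) (b i)) (bq (c i) (d i))) : Iso (F := F) (pq a b) (pq c d) := by
  choose e he using h
  exact ⟨LinearEquiv.piCongrRight e, fun x => by simp [pq, he]⟩

/-- totally isotropic subspace of dimension at least `m` -/
def TI (Q : V → F) (m : ℕ) : Prop :=
  ∃ W : Submodule F V, (∀ w ∈ W, Q w = 0) ∧ m ≤ Module.finrank F W

theorem TI.of_inj {Q : V → F} {m : ℕ} (g : (Fin m → F) →ₗ[F] V) (hg : Function.Injective g)
    (h : ∀ x, Q (g x) = 0) : TI (F := F) Q m := by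
  refine ⟨LinearMap.range g, ?_, ?_⟩
  · rintro _ ⟨x, rfl⟩; exact h x
  · rw [LinearMap.finrank_range_of_inj hg]; simp

theorem TI.iso {Q : V → F} {Q' : V' → F} (h : Iso (F := F) Q Q') {m : ℕ} (t : TI (F := F) Q m) :
    TI (F := F) Q' m := by
  obtain ⟨e, he⟩ := h
  obtain ⟨W, hW, hm⟩ := t
  refine ⟨W.map e.toLinearMap, ?_, ?_⟩
  · rintro _ ⟨x, hx, rfl⟩
    simpa [he] using hW x hx
  · rwa [LinearEquiv.finrank_map_eq]

theorem TI.mono {Q : V → F} {m m' : ℕ} (t : TI (F := F) Q m) (h : m' ≤ m) : TI (F := F) Q m' := by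
  obtain ⟨W, hW, hm⟩ := t
  exact ⟨W, hW, h.trans hm⟩

end iso

section decomp
variable {F : Type*} [Field F]

open QuadraticMap in
theorem decomp [CharP F 2] (N : ℕ) : ∀ {V : Type _} [AddCommGroup V] [Module F V]
    [FiniteDimensional F V] (Q : QuadraticForm F V), Module.finrank F V ≤ N →
    (∀ x, (∀ y, polar Q x y = 0) → x = 0) →
    ∃ (n : ℕ) (a b : Fin n → F), Iso (F := F) (Q : V → F) (pq a b) := by
  induction N with
  | zero =>
    intro V _ _ _ Q hN hQ
    have : Subsingleton V := Module.finrank_zero_iff.1 (Nat.le_zero.1 hN)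
    refine ⟨0, fun _ => 0, fun _ => 0, 0, fun x => ?_⟩
    rw [Subsingleton.elim x 0]; simp [pq]
  | succ N ih =>
    intro V _ _ _ Q hN hQ
    by_cases hV : Subsingleton V
    · refine ⟨0, fun _ => 0, fun _ => 0, 0, fun x => ?_⟩
      rw [Subsingleton.elim x 0]; simp [pq]
    have : Nontrivial V := not_subsingleton_iff_nontrivial.1 hV
    obtain ⟨x, hx⟩ := exists_ne (0 : V)
    have : ∃ y, polar Q x y ≠ 0 := by
      by_contra! h
      exact hx (hQ x h)
    obtain ⟨y, hxy⟩ : ∃ y, polar Q x y = 1 := by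
      obtain ⟨y, hy⟩ := this
      exact ⟨(polar Q x y)⁻¹ • y, by simp [hy]⟩
    have hyx : polar Q y x = 1 := by rw [polar_comm, hxy]
    have hself : ∀ z, polar Q z z = 0 := fun z => by
      rw [polar_self]; simp [CharTwo.two_eq_zero]
    let U : Submodule F V := LinearMap.ker (polarBilin Q x) ⊓ LinearMap.ker (polarBilin Q y)
    have hU : ∀ w, w ∈ U ↔ polar Q x w = 0 ∧ polar Q y w = 0 := fun w => by simp [U]
    let g : ((F × F) × U) →ₗ[F] V :=
      { toFun := fun p => p.1.1 • x + p.1.2 • y + p.2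
        map_add' := fun p p' => by simp [add_smul]; abel
        map_smul' := fun c p => by simp [mul_smul] }
    have hg : ∀ p, g p = p.1.1 • x + p.1.2 • y + p.2 := fun p => rfl
    have hbij : Function.Bijective g := by
      constructor
      · rw [← LinearMap.ker_eq_bot, LinearMap.ker_eq_bot']
        intro p hp
        rw [hg] at hp
        obtain ⟨h1, h2⟩ := (hU p.2).1 p.2.2
        have e1 : p.1.2 = 0 := by
          have := congrArg (polar Q x) hp
          simpa [hself, hxy, h1] using this
        have e2 : p.1.1 = 0 := by
          have := congrArg (polar Q y) hp
          simpa [hself, hyx, h2] using this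
        have e3 : p.2 = 0 := by
          rw [e1, e2] at hp
          simpa using hp
        ext <;> simp [e1, e2, e3]
      · intro v
        refine ⟨((polar Q y v, polar Q x v), ⟨v - polar Q y v • x - polar Q x v • y, ?_⟩), ?_⟩
        · rw [hU]
          simp [hself, hxy, hyx]
        · rw [hg]; simp
    let e : ((F × F) × U) ≃ₗ[F] V := LinearEquiv.ofBijective g hbij
    have hfin : Module.finrank F U ≤ N := by
      have := e.finrank_eq
      simp at this
      omega
    have hUn : ∀ u : U, (∀ w : U, polar (Q.restrict U) u w = 0) → u = 0 := by
      intro u hu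
      obtain ⟨h1, h2⟩ := (hU u).1 u.2
      apply Subtype.ext
      apply hQ
      intro v
      obtain ⟨p, rfl⟩ := hbij.2 v
      have h3 : polar Q u p.2 = 0 := hu p.2
      rw [hg]
      rw [polar_comm] at h1 h2
      simp [h1, h2, h3]
    obtain ⟨n, a, b, hi⟩ := ih (Q.restrict U) hfin hUn
    refine ⟨n + 1, Fin.cons (Q x) a, Fin.cons (Q y) b, ?_⟩
    have h1 : Iso (F := F) (osum (bq (Q x) (Q y)) (Q.restrict U : U → F)) (Q : V → F) := by
      refine ⟨e, fun p => ?_⟩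
      obtain ⟨h1, h2⟩ := (hU p.2).1 p.2.2
      change Q (g p) = _
      rw [hg, QuadraticMap.map_add (⇑Q) (p.1.1 • x + p.1.2 • y), QuadraticMap.map_add (⇑Q) (p.1.1 • x)]
      simp [osum, bq, hxy, h1, h2, QuadraticMap.map_smul]
      ring
    have h2 := iso_pq_succ (Fin.cons (Q x) a : Fin (n+1) → F) (Fin.cons (Q y) b)
    simp only [Fin.cons_zero, Fin.cons_succ] at h2
    exact h1.symm.trans (((Iso.refl _).osum hi).trans h2)

theorem decompQF [CharP F 2] (q : QF F) (hq : q.Nonsingular) :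
    ∃ (n : ℕ) (a b : Fin n → F), Iso (F := F) q.eval (pq a b) := by
  let B : LinearMap.BilinForm F (Fin q.dim → F) := Matrix.toLinearMap₂' F q.c
  have hB : ∀ x y, B x y = x ⬝ᵥ q.c.mulVec y := fun x y => by
    simp [B, Matrix.toLinearMap₂'_apply']
  have he : (LinearMap.BilinMap.toQuadraticMap B : (Fin q.dim → F) → F) = q.eval := by
    ext x
    rw [LinearMap.BilinMap.toQuadraticMap_apply, hB]
    simp only [dotProduct, Matrix.mulVec, QF.eval, Finset.mul_sum]
    refine Finset.sum_congr rfl fun i _ => Finset.sum_congr rfl fun j _ => by ring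
  rw [← he]
  refine decomp _ _ le_rfl fun x hx => hq x ?_
  have : ∀ y, y ⬝ᵥ (q.c + q.c.transpose).mulVec x = 0 := fun y => by
    have := hx y
    rw [LinearMap.BilinMap.polar_toQuadraticMap, hB, hB] at this
    rw [Matrix.add_mulVec, dotProduct_add, ← this, add_comm, Matrix.mulVec_transpose,
      dotProduct_comm y, ← Matrix.dotProduct_mulVec]
  exact dotProduct_eq_zero _ (fun w => by rw [dotProduct_comm]; exact this w)

end decomp

section graph
variable {K : Type*} [Field K]

/-- the polar form of `pq` in characteristic two -/
def pb {n : ℕ} (v w : Fin n → K × K) : K := ∑ i, ((v i).1 * (w i).2 + (v i).2 * (w i).1)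

theorem pq_add [CharP K 2] {n : ℕ} (a b : Fin n → K) (v w : Fin n → K × K) :
    pq a b (v + w) = pq a b v + pq a b w + pb v w := by
  simp only [pq, pb, ← Finset.sum_add_distrib]
  refine Finset.sum_congr rfl fun i _ => ?_
  simp only [bq, Pi.add_apply, Prod.fst_add, Prod.snd_add, CharTwo.add_sq]
  ring

/-- chosen coordinate -/
def ch (s : Bool) (p : K × K) : K := if s then p.1 else p.2

theorem transversal {n : ℕ} (W : Submodule K (Fin n → K × K))
    (hW : ∀ v ∈ W, ∀ w ∈ W, pb v w = 0) :
    ∃ s : Fin n → Bool, ∀ w ∈ W, (∀ i, ch (s i) (w i) = 0) → w = 0 := by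
  induction n with
  | zero => exact ⟨fun _ => true, fun w _ _ => Subsingleton.elim _ _⟩
  | succ n ih =>
    by_cases h : ∃ w ∈ W, (w 0).1 ≠ 0 ∧ (w 0).2 = 0 ∧ ∀ i : Fin n, w i.succ = 0
    · obtain ⟨w0, hw0, h1, h2, h3⟩ := h
      let W' : Submodule K (Fin n → K × K) :=
        (W ⊓ LinearMap.ker (LinearMap.fst K K K ∘ₗ LinearMap.proj 0)).map
          (LinearMap.funLeft K (K × K) Fin.succ)
      have hW' : ∀ v ∈ W', ∀ w ∈ W', pb v w = 0 := by
        rintro _ ⟨v, ⟨hv, hv0⟩, rfl⟩ _ ⟨w, ⟨hw, hw0⟩, rfl⟩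
        have := hW v hv w hw
        simp at hv0 hw0
        simpa [pb, Fin.sum_univ_succ, hv0, hw0, LinearMap.funLeft] using this
      obtain ⟨s, hs⟩ := ih W' hW'
      refine ⟨Fin.cons true s, fun w hw hc => ?_⟩
      have c0 : (w 0).1 = 0 := by simpa [ch] using hc 0
      have ct : ∀ i : Fin n, w i.succ = 0 := by
        have := hs (LinearMap.funLeft K (K × K) Fin.succ w) ⟨w, ⟨hw, by simpa using c0⟩, rfl⟩
          (fun i => by simpa [LinearMap.funLeft] using hc i.succ)
        exact fun i => congrFun this i
      have := hW w0 hw0 w hw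
      simp [pb, Fin.sum_univ_succ, h2, h3, c0, ct, h1] at this
      funext i
      refine Fin.cases ?_ (fun i => ct i) i
      exact Prod.ext c0 this
    · let W' : Submodule K (Fin n → K × K) :=
        (W ⊓ LinearMap.ker (LinearMap.snd K K K ∘ₗ LinearMap.proj 0)).map
          (LinearMap.funLeft K (K × K) Fin.succ)
      have hW' : ∀ v ∈ W', ∀ w ∈ W', pb v w = 0 := by
        rintro _ ⟨v, ⟨hv, hv0⟩, rfl⟩ _ ⟨w, ⟨hw, hw0⟩, rfl⟩
        have := hW v hv w hw
        simp at hv0 hw0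
        simpa [pb, Fin.sum_univ_succ, hv0, hw0, LinearMap.funLeft] using this
      obtain ⟨s, hs⟩ := ih W' hW'
      refine ⟨Fin.cons false s, fun w hw hc => ?_⟩
      have c0 : (w 0).2 = 0 := by simpa [ch] using hc 0
      have ct : ∀ i : Fin n, w i.succ = 0 := by
        have := hs (LinearMap.funLeft K (K × K) Fin.succ w) ⟨w, ⟨hw, by simpa using c0⟩, rfl⟩
          (fun i => by simpa [LinearMap.funLeft] using hc i.succ)
        exact fun i => congrFun this i
      funext i
      refine Fin.cases ?_ (fun i => ct i) i
      refine Prod.ext ?_ c0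
      by_contra h1
      exact h ⟨w, hw, h1, c0, ct⟩

theorem graph [CharP K 2] {n : ℕ} (a b : Fin n → K) (h : TI (F := K) (pq a b) n) :
    ∃ (s : Fin n → Bool) (A : Fin n → Fin n → K), (∀ i j, A i j = A j i) ∧
      ∀ j, (if s j then a j else b j) + A j j +
        ∑ k, (if s k then b k else a k) * A k j ^ 2 = 0 := by
  obtain ⟨W, hQ, hdim⟩ := h
  have hW : ∀ v ∈ W, ∀ w ∈ W, pb v w = 0 := fun v hv w hw => by
    have := pq_add a b v w
    rw [hQ _ (W.add_mem hv hw), hQ _ hv, hQ _ hw] at this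
    simpa using this.symm
  obtain ⟨s, hs⟩ := transversal W hW
  let p : W →ₗ[K] (Fin n → K) :=
    { toFun := fun w i => ch (s i) (w.1 i)
      map_add' := fun v w => by
        funext i; simp only [ch, Submodule.coe_add, Pi.add_apply]; split <;> simp
      map_smul' := fun c w => by
        funext i; simp only [ch, Submodule.coe_smul, Pi.smul_apply]; split <;> simp }
  have hp : Function.Injective p := by
    rw [← LinearMap.ker_eq_bot, LinearMap.ker_eq_bot']
    intro w hw
    exact Subtype.ext (hs w.1 w.2 fun i => congrFun hw i)
  have hfr : Module.finrank K W = Module.finrank K (Fin n → K) := by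
    have := LinearMap.finrank_le_finrank_of_injective hp
    simp at this ⊢
    omega
  have hsurj := (LinearMap.injective_iff_surjective_of_finrank_eq_finrank hfr).1 hp
  choose w hw using fun j : Fin n => hsurj (Pi.single j 1)
  have hw' : ∀ j k, ch (s k) ((w j).1 k) = if k = j then 1 else 0 := fun j k => by
    have := congrFun (hw j) k
    rw [Pi.single_apply] at this
    exact this
  have key : ∀ i j, ch (!s j) ((w i).1 j) + ch (!s i) ((w j).1 i) = 0 := by
    intro i j
    have h1 : pb (w i).1 (w j).1 = ∑ k, (ch (s k) ((w i).1 k) * ch (!s k) ((w j).1 k)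
        + ch (!s k) ((w i).1 k) * ch (s k) ((w j).1 k)) := by
      unfold pb
      refine Finset.sum_congr rfl fun k _ => ?_
      cases s k <;> simp [ch] <;> ring
    rw [hW _ (w i).2 _ (w j).2] at h1
    simp_rw [hw', Finset.sum_add_distrib] at h1
    simp at h1
    rw [h1, add_comm]
  refine ⟨s, fun k j => ch (!s k) ((w j).1 k), fun i j => ?_, fun j => ?_⟩
  · exact CharTwo.add_eq_zero.1 (key j i)
  · have h1 : pq a b (w j).1 = ∑ k, ((if s k then a k else b k) * ch (s k) ((w j).1 k) ^ 2
        + ch (!s k) ((w j).1 k) * ch (s k) ((w j).1 k)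
        + (if s k then b k else a k) * ch (!s k) ((w j).1 k) ^ 2) := by
      unfold pq
      refine Finset.sum_congr rfl fun k _ => ?_
      cases s k <;> simp [ch, bq] <;> ring
    rw [hQ _ (w j).2] at h1
    simp_rw [hw', Finset.sum_add_distrib] at h1
    simpa using h1.symm

theorem sum_symm [CharP K 2] {n : ℕ} (A : Fin n → Fin n → K) (h : ∀ i j, A i j = A j i) :
    ∑ i, ∑ j, A i j = ∑ i, A i i := by
  induction n with
  | zero => simp
  | succ n ih =>
    have := ih (fun i j => A i.succ j.succ) (fun i j => h _ _)
    simp only [Fin.sum_univ_succ, Finset.sum_add_distrib, this]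
    rw [Finset.sum_congr rfl fun i _ => h (Fin.succ i) 0]
    generalize ∑ x : Fin n, A 0 x.succ = z
    have := CharTwo.add_self_eq_zero z
    linear_combination this

theorem bq_swap (a b : K) : Iso (F := K) (bq a b) (bq b a) :=
  ⟨LinearEquiv.prodComm K K K, fun x => by simp [bq]; ring⟩

theorem bq_zero [CharP K 2] (c : K) : Iso (F := K) (bq c 0) (bq 0 0) :=
  ⟨{ toFun := fun p => (p.1, p.2 + c * p.1)
     invFun := fun p => (p.1, p.2 + c * p.1)
     map_add' := fun p p' => by ext <;> simp; ring
     map_smul' := fun r p => by ext <;> simp; ring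
     left_inv := fun p => by
      ext
      · rfl
      · simp [add_assoc, CharTwo.add_self_eq_zero]
     right_inv := fun p => by
      ext
      · rfl
      · simp [add_assoc, CharTwo.add_self_eq_zero] }, fun x => by simp [bq]; ring⟩

theorem hyperbolic_of_TI [CharP K 2] {n : ℕ} (a b : Fin n → K) (h : TI (F := K) (pq a b) n) :
    Iso (F := K) (pq a b) (pq (fun _ : Fin n => (0:K)) (fun _ => 0)) := by
  obtain ⟨s, A, hA, hd⟩ := graph a b h
  have i1 : Iso (F := K) (pq a b)
      (pq (fun k => if s k then b k else a k) (fun k => if s k then a k else b k)) := by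
    apply pq_congr
    intro i
    cases s i
    · exact Iso.refl _
    · exact bq_swap _ _
  generalize hc : (fun k => if s k then b k else a k) = c at *
  generalize hd' : (fun k => if s k then a k else b k) = d at *
  have hd2 : ∀ j, d j + A j j + ∑ k, c k * A k j ^ 2 = 0 := by
    subst hc; subst hd'; exact hd
  have hinv : ∀ v : Fin n → K × K, ∀ i, (v i).1 + ∑ j, A i j * (v j).2 + ∑ j, A i j * (v j).2
      = (v i).1 := fun v i => by rw [add_assoc, CharTwo.add_self_eq_zero, add_zero]
  let e : (Fin n → K × K) ≃ₗ[K] (Fin n → K × K) :=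
    { toFun := fun v i => ((v i).1 + ∑ j, A i j * (v j).2, (v i).2)
      invFun := fun v i => ((v i).1 + ∑ j, A i j * (v j).2, (v i).2)
      map_add' := fun p p' => by
        funext i
        ext
        · simp [mul_add, Finset.sum_add_distrib]; ring
        · simp
      map_smul' := fun r p => by
        funext i
        ext
        · simp [mul_add, Finset.mul_sum, mul_left_comm]
        · simp
      left_inv := fun v => by
        funext i
        exact Prod.ext (hinv v i) rfl
      right_inv := fun v => by
        funext i
        exact Prod.ext (hinv v i) rfl }
  have i2 : Iso (F := K) (pq c (fun _ => 0)) (pq c d) := by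
    refine ⟨e, fun v => ?_⟩
    have h1 : pq c d (e v) = ∑ i, (c i * (v i).1 ^ 2 + (v i).1 * (v i).2)
        + (∑ i, ∑ j, c i * A i j ^ 2 * (v j).2 ^ 2 + ∑ i, ∑ j, A i j * (v i).2 * (v j).2
        + ∑ i, d i * (v i).2 ^ 2) := by
      simp only [pq, ← Finset.sum_add_distrib]
      refine Finset.sum_congr rfl fun i _ => ?_
      simp only [e, bq, LinearEquiv.coe_mk, LinearMap.coe_mk, AddHom.coe_mk, CharTwo.add_sq,
        CharTwo.sum_sq]
      have e1 : ∑ j, c i * A i j ^ 2 * (v j).2 ^ 2 = c i * ∑ j, (A i j * (v j).2) ^ 2 := by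
        rw [Finset.mul_sum]; exact Finset.sum_congr rfl fun j _ => by ring
      have e2 : ∑ j, A i j * (v i).2 * (v j).2 = (∑ j, A i j * (v j).2) * (v i).2 := by
        rw [Finset.sum_mul]; exact Finset.sum_congr rfl fun j _ => by ring
      rw [Finset.sum_add_distrib, e1, e2]
      ring
    have h2 : ∑ i, ∑ j, c i * A i j ^ 2 * (v j).2 ^ 2 + ∑ i, ∑ j, A i j * (v i).2 * (v j).2
        + ∑ i, d i * (v i).2 ^ 2 = 0 := by
      rw [sum_symm (fun i j => A i j * (v i).2 * (v j).2) (fun i j => by rw [hA]; ring),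
        Finset.sum_comm, ← Finset.sum_add_distrib, ← Finset.sum_add_distrib]
      refine Finset.sum_eq_zero fun j _ => ?_
      rw [← Finset.sum_mul]
      linear_combination (v j).2 ^ 2 * hd2 j
    rw [h1, h2, add_zero]
    simp [pq, bq]
  exact i1.trans (i2.symm.trans (pq_congr fun i => bq_zero _))

end graph

section cancel
variable {K : Type*} [Field K] {V : Type*} [AddCommGroup V] [Module K V] [FiniteDimensional K V]

theorem TI.reduce_aux {Q : V → K} {m : ℕ} (W : Submodule K (V × (K × K)))
    (hW : ∀ w ∈ W, osum Q (bq 0 0) w = 0) (hm : m + 1 ≤ Module.finrank K W)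
    (φ : (V × (K × K)) →ₗ[K] K) (h1 : ∀ w, φ w = 0 → w.2.1 * w.2.2 = 0)
    (h2 : ∀ w ∈ W, φ w = 0 → w.1 = 0 → w = 0) : TI (F := K) Q m := by
  let f : W →ₗ[K] K := φ ∘ₗ W.subtype
  let g : LinearMap.ker f →ₗ[K] V := (LinearMap.fst K V (K × K) ∘ₗ W.subtype) ∘ₗ
    (LinearMap.ker f).subtype
  have hg : Function.Injective g := by
    rw [injective_iff_map_eq_zero]
    intro w hw
    exact Subtype.ext (Subtype.ext (h2 w.1.1 w.1.2 w.2 hw))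
  refine ⟨LinearMap.range g, ?_, ?_⟩
  · rintro _ ⟨w, rfl⟩
    have := hW w.1.1 w.1.2
    have h3 := h1 w.1.1 w.2
    have h4 : Q w.1.1.1 = 0 := by simpa [osum, bq, h3] using this
    exact h4
  · rw [LinearMap.finrank_range_of_inj hg]
    have e1 := LinearMap.finrank_range_add_finrank_ker f
    have e2 := Submodule.finrank_le (LinearMap.range f)
    simp at e2
    omega

theorem TI.reduce {Q : V → K} (hQ0 : Q 0 = 0) {m : ℕ}
    (h : TI (F := K) (osum Q (bq 0 0)) (m + 1)) : TI (F := K) Q m := by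
  obtain ⟨W, hW, hm⟩ := h
  by_cases hc : ∃ w ∈ W, w.1 = 0 ∧ w.2.1 ≠ 0 ∧ w.2.2 = 0
  · obtain ⟨w0, hw0, e1, e2, e3⟩ := hc
    refine TI.reduce_aux W hW hm (LinearMap.fst K K K ∘ₗ LinearMap.snd K V (K × K)) ?_ ?_
    · intro w hw
      have : w.2.1 = 0 := hw
      simp [this]
    · intro w hw hφ hw1
      have a1 : w.2.1 = 0 := hφ
      have a2 := hW _ (W.add_mem hw0 hw)
      have a3 := hW _ hw
      simp [osum, bq, e1, hw1, e3, a1, hQ0] at a2 a3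

      have a4 : w.2.2 = 0 := by simpa [e2] using a2
      exact Prod.ext hw1 (Prod.ext a1 a4)
  · refine TI.reduce_aux W hW hm (LinearMap.snd K K K ∘ₗ LinearMap.snd K V (K × K)) ?_ ?_
    · intro w hw
      have : w.2.2 = 0 := hw
      simp [this]
    · intro w hw hφ hw1
      refine Prod.ext hw1 (Prod.ext ?_ hφ)
      by_contra h
      exact hc ⟨w, hw, hw1, h, hφ⟩

theorem TI.reduce_hyp {Q : V → K} (hQ0 : Q 0 = 0) {m k : ℕ}
    (h : TI (F := K) (osum Q (pq (fun _ : Fin k => (0:K)) (fun _ => 0))) (m + k)) :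
    TI (F := K) Q m := by
  induction k generalizing m with
  | zero =>
    refine TI.iso ?_ h
    exact ⟨LinearEquiv.prodUnique, fun x => by
      have h : (LinearEquiv.prodUnique (R := K) (M := V) (M₂ := Fin 0 → K × K) x) = x.1 := rfl
      rw [h]; simp [osum, pq]⟩
  | succ k ih =>
    have i1 := iso_pq_succ (fun _ : Fin (k+1) => (0:K)) (fun _ => 0)
    have i2 : Iso (F := K) (osum Q (pq (fun _ : Fin (k+1) => (0:K)) (fun _ => 0)))
        (osum (osum Q (pq (fun _ : Fin k => (0:K)) (fun _ => 0))) (bq 0 0)) :=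
      ((Iso.refl Q).osum (i1.symm.trans (iso_comm _ _))).trans (iso_assoc _ _ _).symm
    apply ih
    exact TI.reduce (by simp [osum, pq, bq, hQ0]) (TI.iso i2 h)

theorem TI.reduce_zeros {Q : V → K} {m l : ℕ}
    (h : TI (F := K) (osum Q (fun _ : Fin l → K => (0:K))) (m + l)) :
    TI (F := K) Q m := by
  obtain ⟨W, hW, hm⟩ := h
  let f : W →ₗ[K] V := LinearMap.fst K V (Fin l → K) ∘ₗ W.subtype
  refine ⟨LinearMap.range f, ?_, ?_⟩
  · rintro _ ⟨w, rfl⟩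
    have h4 : Q w.1.1 = 0 := by simpa [osum] using hW w.1 w.2
    exact h4
  · have e1 := LinearMap.finrank_range_add_finrank_ker f
    let g : LinearMap.ker f →ₗ[K] (Fin l → K) := (LinearMap.snd K V (Fin l → K) ∘ₗ W.subtype) ∘ₗ
      (LinearMap.ker f).subtype
    have hg : Function.Injective g := by
      rw [injective_iff_map_eq_zero]
      intro w hw
      exact Subtype.ext (Subtype.ext (Prod.ext w.2 hw))
    have e2 := LinearMap.finrank_le_finrank_of_injective hg
    simp at e2
    omega

theorem hyp_cancel [CharP K 2] {n k k' l l' : ℕ} (a b : Fin n → K)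
    (h : Iso (F := K)
      (osum (pq a b) (osum (pq (fun _ : Fin k => (0:K)) (fun _ => 0)) (fun _ : Fin l → K => (0:K))))
      (osum (pq (fun _ : Fin k' => (0:K)) (fun _ => 0)) (fun _ : Fin l' → K => (0:K)))) :
    Iso (F := K) (pq a b) (pq (fun _ : Fin n => (0:K)) (fun _ => 0)) := by
  apply hyperbolic_of_TI
  obtain ⟨e, he⟩ := h
  have hdim := e.finrank_eq
  simp [Module.finrank_pi_fintype] at hdim
  have hll : l ≤ l' := by
    have hrad : ∀ z : Fin l → K, (e (0, 0, z)).1 = 0 := by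
      intro z
      generalize hw : e (0, 0, z) = w
      have hr : ∀ u, pq (fun _ : Fin k' => (0:K)) (fun _ => 0) (u + w.1) =
          pq (fun _ : Fin k' => (0:K)) (fun _ => 0) u := by
        intro u
        obtain ⟨v, hv⟩ := e.surjective (u, 0)
        have h1 := he (v + (0, 0, z))
        have h2 := he v
        rw [map_add, hw, hv] at h1
        rw [hv] at h2
        simp [osum] at h1 h2
        rw [h1, h2]
      have h0 := hr 0
      have hb : ∀ u, pb u w.1 = 0 := fun u => by
        have h1 := hr u
        rw [pq_add] at h1
        rw [zero_add] at h0
        rw [h0] at h1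
        have h2 : pq (fun _ : Fin k' => (0:K)) (fun _ => 0) 0 = 0 := by simp [pq, bq]
        rw [h2] at h1
        simpa using h1
      funext i
      have b1 := hb (Pi.single i (1, 0))
      have b2 := hb (Pi.single i (0, 1))
      simp only [pb] at b1 b2
      rw [Finset.sum_eq_single i (fun j _ hj => by simp [Pi.single_eq_of_ne hj]) (by simp)] at b1 b2
      simp at b1 b2
      exact Prod.ext b2 b1
    let g : (Fin l → K) →ₗ[K] (Fin l' → K) := LinearMap.snd K _ _ ∘ₗ e.toLinearMap ∘ₗ
      LinearMap.inr K _ _ ∘ₗ LinearMap.inr K _ _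
    have hg : Function.Injective g := by
      rw [injective_iff_map_eq_zero]
      intro z hz
      have : e (0, 0, z) = 0 := Prod.ext (hrad z) hz
      simpa using this
    have e2 := LinearMap.finrank_le_finrank_of_injective hg
    simpa using e2
  have t0 : TI (F := K) (osum (pq (fun _ : Fin k' => (0:K)) (fun _ => 0))
      (fun _ : Fin l' → K => (0:K))) (k' + l') := by
    let g : ((Fin k' → K) × (Fin l' → K)) →ₗ[K] ((Fin k' → K × K) × (Fin l' → K)) :=
      { toFun := fun p => (fun i => (p.1 i, 0), p.2)
        map_add' := fun p p' => by
          refine Prod.ext (funext fun i => ?_) rfl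
          simp
        map_smul' := fun r p => by
          refine Prod.ext (funext fun i => ?_) rfl
          simp }
    have hg : Function.Injective g := fun p p' hpp => by
      have h1 : (fun i => (p.1 i, (0:K))) = fun i => (p'.1 i, 0) := 
        congrArg (fun z : (Fin k' → K × K) × (Fin l' → K) => z.1) hpp
      have h2 : p.2 = p'.2 := congrArg (fun z : (Fin k' → K × K) × (Fin l' → K) => z.2) hpp
      exact Prod.ext (funext fun i => congrArg Prod.fst (congrFun h1 i)) h2
    refine ⟨LinearMap.range g, ?_, ?_⟩
    · rintro _ ⟨p, rfl⟩
      simp [g, osum, pq, bq]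
    · rw [LinearMap.finrank_range_of_inj hg]; simp
  have t1 := TI.iso (Iso.symm ⟨e, he⟩) t0
  have t2 := TI.iso (iso_assoc _ _ _).symm t1
  have t3 := TI.reduce_zeros (m := n + k) (TI.mono t2 (by omega))
  exact TI.reduce_hyp (by simp [pq, bq]) t3

end cancel

section witt
variable (F : Type*) [Field F]

/-- isometry setoid -/
def isoSetoid : Setoid (QF F) where
  r := fun q q' => Iso (F := F) q.eval q'.eval
  iseqv := ⟨fun _ => Iso.refl _, fun h => h.symm, fun h h' => h.trans h'⟩

/-- isometry classes -/
def IsoCl : Type _ := Quotient (isoSetoid F)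

variable {F}

/-- isometry class -/
def icl (q : QF F) : IsoCl F := Quotient.mk (isoSetoid F) q

theorem icl_eq {q q' : QF F} : icl q = icl q' ↔ Iso (F := F) q.eval q'.eval :=
  Quotient.eq (r := isoSetoid F)

instance : Add (IsoCl F) where
  add := Quotient.map₂ orthSum fun _ _ h _ _ h' =>
    (iso_orthSum _ _).trans ((Iso.osum h h').trans (iso_orthSum _ _).symm)

instance : Zero (IsoCl F) := ⟨icl nil⟩

theorem icl_add (q q' : QF F) : icl (orthSum q q') = icl q + icl q' := rfl

theorem icl_add_comm (x y : IsoCl F) : x + y = y + x := by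
  induction x using Quotient.inductionOn
  induction y using Quotient.inductionOn
  exact icl_eq.2 ((iso_orthSum _ _).trans ((iso_comm _ _).trans (iso_orthSum _ _).symm))

theorem icl_add_zero (x : IsoCl F) : x + 0 = x := by
  induction x using Quotient.inductionOn
  exact icl_eq.2 ((iso_orthSum _ _).trans (iso_nil _))

instance : AddCommMonoid (IsoCl F) where
  add_assoc x y z := by
    induction x using Quotient.inductionOn
    induction y using Quotient.inductionOn
    induction z using Quotient.inductionOn
    exact icl_eq.2 ((iso_orthSum _ _).trans (((iso_orthSum _ _).osum (Iso.refl _)).trans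
      ((iso_assoc _ _ _).trans (((Iso.refl _).osum (iso_orthSum _ _).symm).trans
        (iso_orthSum _ _).symm))))
  zero_add x := by rw [icl_add_comm, icl_add_zero]
  add_zero := icl_add_zero
  add_comm := icl_add_comm
  nsmul := nsmulRec

theorem icl_hyp (k : ℕ) : icl (hyp (F := F) k) = k • icl (hypPlane (F := F)) := by
  induction k with
  | zero => simp; rfl
  | succ k ih =>
    have : hyp (F := F) (k+1) = orthSum hypPlane (hyp k) := by
      simp [hyp, sumList, List.replicate_succ]
    rw [this, icl_add, ih, succ_nsmul, add_comm]

theorem icl_zeros (l l' : ℕ) : icl (zeros (F := F) (l + l')) = icl (zeros l) + icl (zeros l') := by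
  rw [← icl_add, icl_eq]
  refine Iso.trans ?_ (iso_orthSum _ _).symm
  refine ⟨LinearEquiv.ofFinrankEq _ _ ?_, fun x => ?_⟩
  · change Module.finrank F (Fin (l + l') → F) = Module.finrank F ((Fin l → F) × (Fin l' → F))
    simp
  · simp [osum, zeros_eval]

/-- The trivial part -/
def triv (k l : ℕ) : IsoCl F := k • icl (hypPlane (F := F)) + icl (zeros l)

theorem triv_add (k l k' l' : ℕ) : triv (F := F) k l + triv k' l' = triv (k + k') (l + l') := by
  simp only [triv, icl_zeros, add_nsmul]
  abel

/-- Witt congruence -/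
def wcon (F : Type*) [Field F] : AddCon (IsoCl F) where
  r := fun x y => ∃ k k' l l', x + triv k l = y + triv k' l'
  iseqv := by
    refine ⟨fun x => ⟨0, 0, 0, 0, rfl⟩, fun ⟨k, k', l, l', h⟩ => ⟨k', k, l', l, h.symm⟩, ?_⟩
    rintro x y z ⟨k, k', l, l', h⟩ ⟨m, m', p, p', h'⟩
    refine ⟨k + m, k' + m', l + p, l' + p', ?_⟩
    rw [← triv_add, ← triv_add, ← add_assoc, h, add_right_comm, h', add_assoc, add_comm (triv m' p')]
  add' := by
    rintro x y z w ⟨k, k', l, l', h⟩ ⟨m, m', p, p', h'⟩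
    refine ⟨k + m, k' + m', l + p, l' + p', ?_⟩
    rw [← triv_add, ← triv_add, add_add_add_comm, h, h', add_add_add_comm]

/-- Witt class -/
def cls (q : QF F) : (wcon F).Quotient := (icl q : IsoCl F)

theorem icl_triv (q : QF F) (k l : ℕ) :
    icl (orthSum q (orthSum (hyp k) (zeros l))) = icl q + triv k l := by
  rw [icl_add, icl_add, icl_hyp]; rfl

theorem cls_eq {q q' : QF F} : cls q = cls q' ↔ WittEquiv q q' := by
  unfold cls
  rw [AddCon.eq]
  change (∃ k k' l l', icl q + triv k l = icl q' + triv k' l') ↔ _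
  simp only [← icl_triv, icl_eq]
  rfl

theorem cls_iso {q q' : QF F} (h : Iso (F := F) q.eval q'.eval) : cls q = cls q' := by
  unfold cls; rw [icl_eq.2 h]

theorem cls_add (q q' : QF F) : cls (orthSum q q') = cls q + cls q' := rfl

theorem cls_nil : cls (nil : QF F) = 0 := rfl

theorem cls_sumList (l : List (QF F)) : cls (sumList l) = (l.map cls).sum := by
  induction l with
  | nil => rfl
  | cons q l ih => simp [sumList, cls_add, ← ih]

theorem cls_pf {n : ℕ} (a b : Fin n → F) : cls (pf a b) = ∑ i, cls (bin (a i) (b i)) := by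
  rw [pf, cls_sumList, List.map_ofFn, List.sum_ofFn]; rfl

theorem cls_bin {a b c d : F} (h : Iso (F := F) (bq a b) (bq c d)) :
    cls (bin a b) = cls (bin c d) :=
  cls_iso ((iso_bin _ _).trans (h.trans (iso_bin _ _).symm))

theorem cls_hyp : cls (bin 0 0 : QF F) = 0 := by
  rw [← cls_nil, cls_eq]
  refine ⟨0, 1, 0, 0, ?_⟩
  change Iso (F := F) _ _
  rw [← icl_eq, icl_triv, icl_triv]
  have : icl (nil : QF F) = 0 := rfl
  rw [this]
  simp [triv, hypPlane]

variable [CharP F 2]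

theorem cls_bin_zero (c : F) : cls (bin c 0) = 0 := by
  rw [cls_bin (bq_zero c), cls_hyp]

theorem cls_bin_add (a b c : F) : cls (bin a b) + cls (bin a c) = cls (bin a (b + c)) := by
  have h2 : (2 : F) = 0 := CharTwo.two_eq_zero
  have h : Iso (F := F) (osum (bq a b) (bq a c)) (osum (bq a (b + c)) (bq 0 0)) := by
    refine ⟨
      { toFun := fun p => ((p.1.1 + p.2.1, p.1.2), (p.2.1 + c * (p.1.2 + p.2.2), p.1.2 + p.2.2))
        invFun := fun p => ((p.1.1 + p.2.1 + c * p.2.2, p.1.2), (p.2.1 + c * p.2.2, p.2.2 + p.1.2))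
        map_add' := fun p p' => by ext <;> simp <;> ring
        map_smul' := fun r p => by ext <;> simp <;> ring
        left_inv := fun p => by
          ext <;> simp <;> grind
        right_inv := fun p => by
          ext <;> simp <;> grind }, fun p => ?_⟩
    simp [osum, bq]
    grind
  have := cls_iso ((iso_orthSum _ _).trans ((((iso_bin a b).osum (iso_bin a c)).trans h).trans
    (((iso_bin a (b+c)).osum (iso_bin 0 0)).symm.trans (iso_orthSum _ _).symm)))
  rw [cls_add, cls_add, cls_hyp, add_zero] at this
  exact this

theorem cls_bin_sum {ι : Type*} (s : Finset ι) (a : F) (b : ι → F) :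
    cls (bin a (∑ i ∈ s, b i)) = ∑ i ∈ s, cls (bin a (b i)) := by
  classical
  induction s using Finset.induction_on with
  | empty => simp [cls_bin_zero]
  | insert i s hi ih => rw [Finset.sum_insert hi, Finset.sum_insert hi, ← cls_bin_add, ih]

theorem cls_bin_artin (c r : F) : cls (bin c (r + c * r ^ 2)) = 0 := by
  rw [← cls_bin_zero c]
  have h2 : (2 : F) = 0 := CharTwo.two_eq_zero
  apply cls_bin
  refine ⟨
    { toFun := fun p => (p.1 + r * p.2, p.2)
      invFun := fun p => (p.1 + r * p.2, p.2)
      map_add' := fun p p' => by ext <;> simp; ring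
      map_smul' := fun t p => by ext <;> simp; ring
      left_inv := fun p => by ext <;> simp; grind
      right_inv := fun p => by ext <;> simp; grind }, fun p => ?_⟩
  simp [bq]
  grind

theorem smul_eval (t : F) (q : QF F) (x) : (QF.smul t q).eval x = t * q.eval x := by
  simp only [QF.eval, QF.smul, Finset.mul_sum, Matrix.smul_apply, smul_eq_mul, mul_assoc]
  rfl

theorem smul_iso (t : F) {q q' : QF F} (h : Iso (F := F) q.eval q'.eval) :
    Iso (F := F) (QF.smul t q).eval (QF.smul t q').eval := by
  obtain ⟨e, he⟩ := h
  exact ⟨e, fun x => (smul_eval t q' (e x)).trans ((congrArg (t * ·) (he x)).trans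
    (smul_eval t q x).symm)⟩

theorem cls_pair (a b t : F) (ht : t ≠ 0) :
    cls (QF.smul t (bin a (b * t))) = cls (bin b (a * t)) := by
  apply cls_iso
  refine Iso.trans ?_ (iso_bin _ _).symm
  obtain ⟨e, he⟩ := iso_bin a (b * t)
  have i1 : Iso (F := F) (QF.smul t (bin a (b * t))).eval (fun p => t * bq a (b * t) p) :=
    ⟨e, fun x => (congrArg (t * ·) (he x)).trans (smul_eval t _ x).symm⟩
  refine i1.trans ⟨
    { toFun := fun p => (t * p.2, p.1)
      invFun := fun p => (p.2, t⁻¹ * p.1)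
      map_add' := fun p p' => by ext <;> simp; ring
      map_smul' := fun r p => by ext <;> simp; ring
      left_inv := fun p => by ext <;> simp [ht]
      right_inv := fun p => by ext <;> simp [ht] }, fun p => ?_⟩
  simp [bq]
  ring

theorem bin_nonsingular (a b : F) : (bin a b).Nonsingular := by
  unfold QF.Nonsingular bin
  intro x hx
  have h0 := congrFun hx 0
  have h1 := congrFun hx 1
  simp [Matrix.mulVec, dotProduct, Fin.sum_univ_two, CharTwo.add_self_eq_zero] at h0 h1
  funext i
  fin_cases i
  · exact h1
  · exact h0

end witt

section base
variable {F K : Type*} [Field F] [Field K] (f : F →+* K)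

theorem map_orthSum (q q' : QF F) :
    (orthSum q q').map f = orthSum (q.map f) (q'.map f) := by
  unfold orthSum QF.map
  congr 1
  funext i j
  simp only [Matrix.reindex_apply, Matrix.submatrix_apply]
  rcases finSumFinEquiv.symm i with i | i <;> rcases finSumFinEquiv.symm j with j | j <;>
    simp [Matrix.fromBlocks]

theorem map_nil : (nil : QF F).map f = nil := by
  unfold nil QF.map
  congr 1
  funext i j
  exact i.elim0

theorem map_sumList (l : List (QF F)) :
    (sumList l).map f = sumList (l.map (QF.map f)) := by
  induction l with
  | nil => exact map_nil f
  | cons q l ih =>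
    change (orthSum q (sumList l)).map f = orthSum (q.map f) (sumList (l.map (QF.map f)))
    rw [map_orthSum, ih]

theorem map_bin (a b : F) : (bin a b).map f = bin (f a) (f b) := by
  unfold bin QF.map
  congr 1
  funext i j
  fin_cases i <;> fin_cases j <;> simp

theorem map_zeros (l : ℕ) : (zeros l : QF F).map f = zeros l := by
  unfold zeros diag QF.map
  congr 1
  funext i j
  simp [Matrix.diagonal_apply]

theorem map_smul (t : F) (q : QF F) : (QF.smul t q).map f = QF.smul (f t) (q.map f) := by
  unfold QF.smul QF.map
  congr 1
  funext i j
  simp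
  rfl

theorem map_pf {n : ℕ} (a b : Fin n → F) :
    (pf a b).map f = pf (fun i => f (a i)) (fun i => f (b i)) := by
  rw [pf, map_sumList, List.map_ofFn, pf]
  congr 2
  funext i
  exact map_bin f _ _

theorem map_hyp (k : ℕ) : (hyp k : QF F).map f = hyp k := by
  rw [hyp_eq, map_pf, hyp_eq]; simp

/-- evaluation of a matrix as a quadratic form -/
def mev {n : ℕ} (c : Matrix (Fin n) (Fin n) F) (x : Fin n → F) : F := x ⬝ᵥ c.mulVec x

theorem mev_eq {n : ℕ} (c : Matrix (Fin n) (Fin n) F) (x : Fin n → F) :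
    mev c x = ∑ i, ∑ j, c i j * x i * x j := by
  simp only [mev, dotProduct, Matrix.mulVec, Finset.mul_sum]
  exact Finset.sum_congr rfl fun i _ => Finset.sum_congr rfl fun j _ => by ring

theorem mev_mul {n m : ℕ} (c : Matrix (Fin n) (Fin n) F) (M : Matrix (Fin n) (Fin m) F)
    (x : Fin m → F) : mev c (M.mulVec x) = mev (M.transpose * c * M) x := by
  unfold mev
  rw [← Matrix.mulVec_mulVec, ← Matrix.mulVec_mulVec, Matrix.mulVec_transpose,
    dotProduct_comm x, ← Matrix.dotProduct_mulVec, dotProduct_comm]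

theorem mev_coeff {n : ℕ} {c d : Matrix (Fin n) (Fin n) F} (h : ∀ x, mev c x = mev d x) :
    (∀ i, c i i = d i i) ∧ ∀ i j, c i j + c j i = d i j + d j i := by
  have hs : ∀ (c : Matrix (Fin n) (Fin n) F) i j,
      (Pi.single i 1 : Fin n → F) ⬝ᵥ c.mulVec (Pi.single j 1) = c i j := fun c i j => by
    simp
  have h1 : ∀ i, c i i = d i i := fun i => by
    have := h (Pi.single i 1)
    unfold mev at this
    rwa [hs, hs] at this
  refine ⟨h1, fun i j => ?_⟩
  have := h (Pi.single i 1 + Pi.single j 1)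
  unfold mev at this
  simp only [Matrix.mulVec_add, dotProduct_add, add_dotProduct, hs, h1] at this
  linear_combination this

theorem mev_of_coeff [CharP F 2] {n : ℕ} {c d : Matrix (Fin n) (Fin n) F} (h1 : ∀ i, c i i = d i i)
    (h2 : ∀ i j, c i j + c j i = d i j + d j i) (x) : mev c x = mev d x := by
  rw [← CharTwo.add_eq_zero, mev_eq, mev_eq, ← Finset.sum_add_distrib]
  simp_rw [← Finset.sum_add_distrib]
  rw [sum_symm]
  · refine Finset.sum_eq_zero fun i _ => ?_
    rw [h1, CharTwo.add_self_eq_zero]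
  · intro i j
    have e1 := h2 i j
    have h0 : (2 : F) = 0 := CharTwo.two_eq_zero
    linear_combination x i * x j * e1 + (x i * x j * d i j - x i * x j * c j i) * h0

theorem iso_map [CharP K 2] {q q' : QF F} (h : Iso (F := F) q.eval q'.eval) :
    Iso (F := K) (q.map f).eval (q'.map f).eval := by
  obtain ⟨e, he⟩ := h
  let M := LinearMap.toMatrix' e.toLinearMap
  let M' := LinearMap.toMatrix' e.symm.toLinearMap
  have hMM' : M * M' = 1 := by
    rw [← LinearMap.toMatrix'_comp]; simp
  have hM'M : M' * M = 1 := by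
    rw [← LinearMap.toMatrix'_comp]; simp
  have hev : ∀ x, mev (M.transpose * q'.c * M) x = mev q.c x := fun x => by
    rw [← mev_mul, LinearMap.toMatrix'_mulVec, mev_eq, mev_eq]
    exact he x
  obtain ⟨c1, c2⟩ := mev_coeff hev
  have k1 : M.map f * M'.map f = 1 := by
    rw [← Matrix.map_mul, hMM']; simp
  have k2 : M'.map f * M.map f = 1 := by
    rw [← Matrix.map_mul, hM'M]; simp
  have hkey : ∀ x : Fin q.dim → K,
      mev (q'.c.map f) ((M.map f).mulVec x) = mev (q.c.map f) x := by
    intro x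
    rw [mev_mul]
    have e3 : (M.map f).transpose * q'.c.map f * M.map f = (M.transpose * q'.c * M).map f := by
      rw [Matrix.map_mul, Matrix.map_mul]; rfl
    rw [e3]
    apply mev_of_coeff
    · intro i; exact congrArg f (c1 i)
    · intro i j
      have := congrArg f (c2 i j)
      rw [map_add, map_add] at this
      exact this
  exact ⟨Matrix.toLin'OfInv k2 k1, fun x =>
    (mev_eq _ _).symm.trans ((hkey x).trans (mev_eq _ _))⟩

theorem wittEquiv_map [CharP K 2] {q q' : QF F} (h : WittEquiv q q') :
    WittEquiv (q.map f) (q'.map f) := by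
  obtain ⟨k, k', l, l', h⟩ := h
  have : Isometric _ _ := iso_map f h
  simp only [map_orthSum, map_hyp, map_zeros] at this
  exact ⟨k, k', l, l', this⟩

theorem cls_double [CharP K 2] {q : QF K} {n : ℕ} {a b : Fin n → K}
    (h : Iso (F := K) q.eval (pq a b)) (x : K) (hx : x ≠ 0) :
    cls q + cls (QF.smul (x ^ 2) q) = 0 := by
  have h1 : cls (QF.smul (x ^ 2) q) = cls q := by
    apply cls_iso
    refine ⟨LinearEquiv.smulOfNeZero K (Fin q.dim → K) x hx, fun v => ?_⟩
    rw [smul_eval]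
    change q.eval (x • v) = x ^ 2 * q.eval v
    simp only [QF.eval, Finset.mul_sum]
    refine Finset.sum_congr rfl fun i _ => Finset.sum_congr rfl fun j _ => ?_
    change q.c i j * (x * v i) * (x * v j) = _
    ring
  rw [h1, cls_iso (h.trans (iso_pf a b).symm), cls_pf, ← Finset.sum_add_distrib]
  refine Finset.sum_eq_zero fun i _ => ?_
  rw [cls_bin_add, CharTwo.add_self_eq_zero, cls_bin_zero]

end base

theorem sum_mem_symm {M : Type*} [AddCommMonoid M] (P : AddSubmonoid M) {n : ℕ}
    (g : Fin n → Fin n → M) (h0 : ∀ i, g i i ∈ P) (h : ∀ i j, i ≠ j → g i j + g j i ∈ P) :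
    ∑ i, ∑ j, g i j ∈ P := by
  induction n with
  | zero => simp
  | succ n ih =>
    have h1 := ih (fun i j => g i.succ j.succ) (fun i => h0 _)
      (fun i j hij => h _ _ (fun e => hij (Fin.succ_injective _ e)))
    have h2 : ∑ i : Fin n, (g 0 i.succ + g i.succ 0) ∈ P :=
      P.sum_mem fun i _ => h _ _ (Fin.succ_ne_zero i).symm
    have : ∑ i, ∑ j, g i j = g 0 0 + ∑ i : Fin n, (g 0 i.succ + g i.succ 0)
        + ∑ i : Fin n, ∑ j : Fin n, g i.succ j.succ := by
      simp only [Fin.sum_univ_succ, Finset.sum_add_distrib]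
      abel
    rw [this]
    exact P.add_mem (P.add_mem (h0 0) h2) h1

theorem forward {F K : Type*} [Field F] [Field K] [Algebra F K] [CharP F 2] [CharP K 2]
    (hK : ∀ x : K, ∃ y : F, algebraMap F K y = x ^ 2) (q : QF F) (hq : q.Nonsingular)
    (h : Hyperbolic (q.map (algebraMap F K))) :
    cls q ∈ AddSubmonoid.closure {w | ∃ p : F × QF F,
      ((∃ x : K, x ≠ 0 ∧ algebraMap F K p.1 = x ^ 2) ∧ p.2.Nonsingular) ∧
      w = cls (p.2.orthSum (QF.smul p.1 p.2))} := by
  obtain ⟨n, a, b, hi⟩ := decompQF q hq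
  obtain ⟨k, hk⟩ := h
  have i0 := hi.trans (iso_pf a b).symm
  have i1 := iso_map (algebraMap F K) i0
  rw [map_pf] at i1
  have i2 : Iso (F := K) (pq (fun i => algebraMap F K (a i)) (fun i => algebraMap F K (b i)))
      (pq (fun _ : Fin k => (0:K)) (fun _ => 0)) :=
    (iso_pf _ _).symm.trans (i1.symm.trans (Iso.trans hk (iso_hyp k)))
  have hnk : n = k := by
    obtain ⟨e, _⟩ := i2
    have := e.finrank_eq
    simp [Module.finrank_pi_fintype] at this
    exact this
  subst hnk
  have t : TI (F := K) (pq (fun i => algebraMap F K (a i)) (fun i => algebraMap F K (b i))) n := by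
    refine TI.iso i2.symm (TI.of_inj
      { toFun := fun x i => (x i, 0)
        map_add' := fun x y => by funext i; simp
        map_smul' := fun r x => by funext i; simp } ?_ ?_)
    · intro x y hxy
      funext i
      exact congrArg Prod.fst (congrFun hxy i)
    · intro x
      simp [pq, bq]
  obtain ⟨s, A, hA, hd⟩ := graph _ _ t
  let c : Fin n → F := fun k => if s k then b k else a k
  let d : Fin n → F := fun k => if s k then a k else b k
  have hd' : ∀ j, algebraMap F K (d j) + A j j + ∑ k, algebraMap F K (c k) * A k j ^ 2 = 0 := by
    intro j
    rw [← hd j]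
    simp only [c, d, apply_ite (algebraMap F K)]
  have hcls : cls q = ∑ i, cls (bin (c i) (d i)) := by
    rw [cls_iso i0, cls_pf]
    refine Finset.sum_congr rfl fun i _ => ?_
    simp only [c, d]
    cases s i
    · rfl
    · exact cls_bin (bq_swap _ _)
  choose T hT using fun i j => hK (A i j)
  have hTs : ∀ i j, T i j = T j i := fun i j => by
    apply (algebraMap F K).injective
    rw [hT, hT, hA]
  let r : Fin n → F := fun j => d j + ∑ k, c k * T k j
  have hr : ∀ j, algebraMap F K (r j) = A j j := fun j => by
    have h1 := hd' j
    simp only [r, map_add, map_sum, map_mul, hT]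
    rw [add_right_comm, CharTwo.add_eq_zero] at h1
    exact h1
  have hT2 : ∀ j, T j j = r j ^ 2 := fun j => by
    apply (algebraMap F K).injective
    rw [hT, map_pow, hr]
  let u : Fin n → Fin n → F := fun i j => if j = i then r i + c i * r i ^ 2 else c j * T i j
  have hu : ∀ i, d i = ∑ j, u i j := by
    intro i
    have h1 : ∑ j, u i j = r i + ∑ j, c j * T j i := by
      have : ∀ j, u i j = (if j = i then r i else 0) + c j * T j i := by
        intro j
        simp only [u]
        split
        · next h => subst h; rw [hT2]
        · rw [zero_add, hTs]
      simp_rw [this, Finset.sum_add_distrib]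
      simp
    rw [h1]
    simp only [r]
    rw [add_assoc, CharTwo.add_self_eq_zero, add_zero]
  rw [hcls]
  simp_rw [hu, cls_bin_sum]
  apply sum_mem_symm
  · intro i
    simp only [u, if_true]
    rw [cls_bin_artin]
    exact AddSubmonoid.zero_mem _
  · intro i j hij
    simp only [u, if_neg hij, if_neg hij.symm]
    rw [hTs j i]
    by_cases h0 : T i j = 0
    · rw [h0]
      simp only [mul_zero, cls_bin_zero, add_zero]
      exact AddSubmonoid.zero_mem _
    · apply AddSubmonoid.subset_closure
      refine ⟨(T i j, bin (c i) (c j * T i j)), ⟨⟨A i j, ?_, hT i j⟩, bin_nonsingular _ _⟩, ?_⟩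
      · intro hA0
        apply h0
        apply (algebraMap F K).injective
        rw [hT, hA0]; simp
      · rw [cls_add, cls_pair _ _ _ h0]

theorem backward {F K : Type*} [Field F] [Field K] [Algebra F K] [CharP F 2] [CharP K 2]
    (q : QF F) (hq : q.Nonsingular) (l : List (F × QF F))
    (hl : ∀ p ∈ l, (∃ x : K, x ≠ 0 ∧ algebraMap F K p.1 = x ^ 2) ∧ p.2.Nonsingular)
    (h : WittEquiv q (sumList (l.map fun p => p.2.orthSum (QF.smul p.1 p.2)))) :
    Hyperbolic (q.map (algebraMap F K)) := by
  have h1 := cls_eq.2 (wittEquiv_map (algebraMap F K) h)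
  rw [map_sumList, cls_sumList, List.sum_eq_zero, ← cls_nil, cls_eq] at h1
  · obtain ⟨n, a, b, hi⟩ := decompQF q hq
    have i1 := iso_map (algebraMap F K) (hi.trans (iso_pf a b).symm)
    rw [map_pf] at i1
    have i2 := i1.trans (iso_pf _ _)
    obtain ⟨k, k', m, m', h2⟩ := h1
    have hz : ∀ m, Iso (F := K) (zeros (F := K) m).eval (fun _ : Fin m → K => (0:K)) := fun m =>
      ⟨LinearEquiv.refl _ _, fun x => (zeros_eval m x).symm⟩
    have hhz : ∀ k m, Iso (F := K) (orthSum (hyp (F := K) k) (zeros m)).eval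
      (osum (pq (fun _ : Fin k => (0:K)) (fun _ => 0)) (fun _ : Fin m → K => (0:K))) := fun k m =>
        (iso_orthSum _ _).trans ((iso_hyp k).osum (hz m))
    have h3 : Iso (F := K) _ _ := h2
    have h4 := (i2.osum (hhz k m)).symm.trans ((iso_orthSum _ _).symm.trans (h3.trans
      ((iso_orthSum _ _).trans ((iso_comm _ _).trans ((iso_nil _).trans (hhz k' m'))))))
    have h5 := hyp_cancel _ _ h4
    exact ⟨n, i2.trans (h5.trans (iso_hyp n).symm)⟩
  · intro w hw
    simp only [List.map_map, List.mem_map, Function.comp] at hw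
    obtain ⟨p, hp, rfl⟩ := hw
    obtain ⟨⟨x, hx, hx2⟩, hn⟩ := hl p hp
    obtain ⟨n, a, b, hi⟩ := decompQF p.2 hn
    have i1 := iso_map (algebraMap F K) (hi.trans (iso_pf a b).symm)
    rw [map_pf] at i1
    rw [map_orthSum, map_smul, hx2, cls_add]
    exact cls_double (i1.trans (iso_pf _ _)) x hx

theorem main {F K : Type*} [Field F] [Field K] [Algebra F K] [CharP F 2]
    (hK : ∀ x : K, ∃ y : F, algebraMap F K y = x ^ 2) (q : QF F) (hq : q.Nonsingular) :
      (Hyperbolic (q.map (algebraMap F K)) ↔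
        ∃ l : List (F × QF F),
          (∀ p ∈ l, (∃ x : K, x ≠ 0 ∧ algebraMap F K p.1 = x ^ 2) ∧ p.2.Nonsingular) ∧
          WittEquiv q (sumList (l.map fun p => p.2.orthSum (QF.smul p.1 p.2)))) := by
  have : CharP K 2 := charP_of_injective_algebraMap (algebraMap F K).injective 2
  constructor
  · intro h
    obtain ⟨L, hL, hs⟩ := AddSubmonoid.exists_list_of_mem_closure (forward hK q hq h)
    have key : ∀ L : List (wcon F).Quotient, (∀ y ∈ L, ∃ p : F × QF F,
        ((∃ x : K, x ≠ 0 ∧ algebraMap F K p.1 = x ^ 2) ∧ p.2.Nonsingular) ∧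
        y = cls (p.2.orthSum (QF.smul p.1 p.2))) → ∃ l : List (F × QF F),
        (∀ p ∈ l, (∃ x : K, x ≠ 0 ∧ algebraMap F K p.1 = x ^ 2) ∧ p.2.Nonsingular) ∧
        cls (sumList (l.map fun p => p.2.orthSum (QF.smul p.1 p.2))) = L.sum := by
      intro L
      induction L with
      | nil => exact fun _ => ⟨[], by simp, rfl⟩
      | cons y L ih =>
        intro hL
        obtain ⟨l, h1, h2⟩ := ih fun y hy => hL y (List.mem_cons_of_mem _ hy)
        obtain ⟨p, hp, hy⟩ := hL y List.mem_cons_self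
        refine ⟨p :: l, ?_, ?_⟩
        · intro p' hp'
          rcases List.mem_cons.1 hp' with rfl | h
          · exact hp
          · exact h1 _ h
        · rw [List.sum_cons, ← h2, hy]; rfl
    obtain ⟨l, h1, h2⟩ := key L hL
    exact ⟨l, h1, cls_eq.1 (by rw [h2, hs])⟩
  · rintro ⟨l, hl, h⟩
    exact backward q hq l hl h

end WK

open QF in
/-- Let `F` be a field of characteristic 2 and `K/F` an extension with
`K² ⊆ F`.  Then the Witt kernel `W_q(K/F)` equals `Σ_{t ∈ K*²} ⟨1,t⟩_b ⊗ W_q(F)`: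
the class of a nonsingular quadratic form `q` over `F` becomes trivial (hyperbolic)
over `K` if and only if `q` is Witt equivalent to a finite orthogonal sum of forms
`⟨1,t⟩_b ⊗ q' ≅ q' ⊥ t·q'` with `t ∈ K*²` (so `t ∈ F*`) and `q'` nonsingular over `F`. -/
theorem wittKernel_exponent_one_extension
    (F K : Type*) [Field F] [Field K] [Algebra F K] [CharP F 2]
    (hK : ∀ x : K, ∃ y : F, algebraMap F K y = x ^ 2) :
    ∀ q : QF F, q.Nonsingular →
      (Hyperbolic (q.map (algebraMap F K)) ↔
        ∃ l : List (F × QF F),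
          (∀ p ∈ l, (∃ x : K, x ≠ 0 ∧ algebraMap F K p.1 = x ^ 2) ∧ p.2.Nonsingular) ∧
          WittEquiv q (sumList (l.map fun p => p.2.orthSum (smul p.1 p.2)))) := by
  exact fun q hq => WK.main hK q hq
end

section
/- Let F be a field of characteristic 2, let q ≅ q_r ⊥ q_s be a quadratic form over F with q_r nonsingular and q_s ≅ ⟨a₁,…,aₙ⟩ totally singular with not all aᵢ = 0, and let K/F be any field extension. Then there exist indices 1 ≤ i₁ < i₂ < … < i_r ≤ n such that, setting q_s' := ⟨a_{i₁},…,a_{i_r}⟩, one has ((q_s)_K)_an ≅ (q_s')_K and (q_K)_an ≅ φ ⊥ (q_s')_K for some nonsingular quadratic form φ over K. In particular, every field extension is excellent for totally singular quadratic forms. -/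
namespace TSE

open QF

section
variable {K : Type*} [Field K]

/-- The Mathlib quadratic form attached to a coefficient matrix. -/
noncomputable def toQ (q : QF K) : QuadraticForm K (Fin q.dim → K) :=
  q.c.toQuadraticForm'

lemma toQ_apply (q : QF K) (x : Fin q.dim → K) : toQ q x = q.eval x := by
  simp only [toQ, Matrix.toQuadraticForm', LinearMap.BilinMap.toQuadraticMap_apply,
    Matrix.toLinearMap₂'_apply, QF.eval, smul_eq_mul]
  refine Finset.sum_congr rfl fun i _ => Finset.sum_congr rfl fun j _ => ?_
  ring

lemma isometric_iff (q q' : QF K) : Isometric q q' ↔ (toQ q).Equivalent (toQ q') := by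
  constructor
  · rintro ⟨e, he⟩
    exact ⟨⟨e, fun x => by simpa [toQ_apply] using he x⟩⟩
  · rintro ⟨e⟩
    exact ⟨e.toLinearEquiv, fun x => by
      have := e.map_app' x
      rw [toQ_apply, toQ_apply] at this
      exact this⟩

lemma eval_orthSum (q q' : QF K) (x : Fin q.dim → K) (y : Fin q'.dim → K) :
    (q.orthSum q').eval (Fin.append x y) = q.eval x + q'.eval y := by
  unfold QF.eval orthSum
  dsimp only
  rw [Fin.sum_univ_add]
  simp only [Fin.sum_univ_add]
  simp

/-- Splitting coordinates. -/
def appendEquiv (K : Type*) [Field K] (m n : ℕ) :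
    ((Fin m → K) × (Fin n → K)) ≃ₗ[K] (Fin (m + n) → K) where
  toFun p := Fin.append p.1 p.2
  map_add' p p' := by
    ext i
    refine Fin.addCases (fun i => ?_) (fun i => ?_) i <;> simp
  map_smul' c p := by
    ext i
    refine Fin.addCases (fun i => ?_) (fun i => ?_) i <;> simp
  invFun x := (fun i => x (Fin.castAdd n i), fun i => x (Fin.natAdd m i))
  left_inv p := by ext <;> simp
  right_inv x := by
    ext i
    refine Fin.addCases (fun i => ?_) (fun i => ?_) i <;> simp

lemma orthSum_equiv (q q' : QF K) :
    ((toQ q).prod (toQ q')).Equivalent (toQ (q.orthSum q')) :=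
  ⟨⟨appendEquiv K q.dim q'.dim, fun p => by
    rw [toQ_apply]
    exact (eval_orthSum q q' p.1 p.2).trans (by simp [toQ_apply])⟩⟩

lemma eval_diag {n : ℕ} (b : Fin n → K) (x : Fin n → K) :
    (diag b).eval x = ∑ i, b i * x i ^ 2 := by
  unfold QF.eval diag
  dsimp only
  refine Finset.sum_congr rfl fun i _ => ?_
  rw [Finset.sum_eq_single i]
  · simp; ring
  · intro j _ hj
    simp [Matrix.diagonal_apply_ne _ hj.symm]
  · simp

lemma polar_toQ (q : QF K) (x y : Fin q.dim → K) :
    QuadraticMap.polar (toQ q) x y = y ⬝ᵥ (q.c + q.c.transpose).mulVec x := by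
  rw [Matrix.add_mulVec, dotProduct_add, Matrix.mulVec_transpose, dotProduct_comm y (Matrix.vecMul _ _),
    ← Matrix.dotProduct_mulVec]
  unfold toQ Matrix.toQuadraticForm'
  rw [LinearMap.BilinMap.polar_toQuadraticMap, Matrix.toLinearMap₂'_apply',
    Matrix.toLinearMap₂'_apply', add_comm]

lemma nonsingular_iff (q : QF K) : q.Nonsingular ↔
    ∀ x, (∀ y, QuadraticMap.polar (toQ q) x y = 0) → x = 0 := by
  unfold Nonsingular
  refine forall_congr' fun x => ?_
  simp only [polar_toQ]
  refine imp_congr ⟨fun h y => by rw [h]; simp, fun h => ?_⟩ Iff.rfl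
  funext i
  simpa using h (Pi.single i 1)

lemma anisotropic_iff (q : QF K) : q.Anisotropic ↔ (toQ q).Anisotropic := by
  unfold QF.Anisotropic QuadraticMap.Anisotropic
  simp only [toQ_apply]

lemma aniso_of_equiv {V W : Type*} [AddCommGroup V] [Module K V] [AddCommGroup W] [Module K W]
    {q : QuadraticForm K V} {q' : QuadraticForm K W} (h : q.Equivalent q')
    (ha : q.Anisotropic) : q'.Anisotropic := by
  obtain ⟨e⟩ := h
  intro x hx
  have := ha (e.symm x) (by rw [e.symm.map_app, hx])
  have h2 := congrArg e this
  simpa using h2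

lemma nonsing_of_equiv {V W : Type*} [AddCommGroup V] [Module K V] [AddCommGroup W] [Module K W]
    {q : QuadraticForm K V} {q' : QuadraticForm K W} (h : q.Equivalent q')
    (ha : ∀ x, (∀ y, QuadraticMap.polar q x y = 0) → x = 0) :
    ∀ x, (∀ y, QuadraticMap.polar q' x y = 0) → x = 0 := by
  obtain ⟨e⟩ := h
  intro x hx
  have := ha (e.symm x) (fun y => by
    have := hx (e y)
    unfold QuadraticMap.polar at this ⊢
    rw [e.symm.map_app, ← e.map_app y, ← e.map_app (e.symm x + y)]
    have h3 : e (e.symm x + y) = x + e y := by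
      have : e (e.symm x + y) = e (e.symm x) + e y := map_add e.toLinearEquiv _ _
      rw [this]; simp
    rw [h3]; exact this)
  have h2 := congrArg e this
  simpa using h2

lemma prod_congr {V W V' W' : Type*} [AddCommGroup V] [Module K V] [AddCommGroup W] [Module K W]
    [AddCommGroup V'] [Module K V'] [AddCommGroup W'] [Module K W']
    {q : QuadraticForm K V} {q' : QuadraticForm K W}
    {p : QuadraticForm K V'} {p' : QuadraticForm K W'} (h : q.Equivalent q')
    (h' : p.Equivalent p') : (q.prod p).Equivalent (q'.prod p') := by
  obtain ⟨e⟩ := h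
  obtain ⟨e'⟩ := h'
  exact ⟨e.prod e'⟩

lemma prod_assoc {V W X : Type*} [AddCommGroup V] [Module K V] [AddCommGroup W] [Module K W]
    [AddCommGroup X] [Module K X]
    (q : QuadraticForm K V) (q' : QuadraticForm K W) (p : QuadraticForm K X) :
    ((q.prod q').prod p).Equivalent (q.prod (q'.prod p)) :=
  ⟨⟨LinearEquiv.prodAssoc K V W X, fun x => by
    simp [add_assoc]⟩⟩

lemma nil_prod (V : Type*) [AddCommGroup V] [Module K V] (q : QuadraticForm K V) :
    q.Equivalent ((toQ (hyp 0)).prod q) := by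
  have h0 : (toQ (hyp 0 : QF K)) = 0 := by
    ext x
    rw [toQ_apply]
    rfl
  have : Subsingleton (Fin (hyp 0 : QF K).dim → K) :=
    ⟨fun x y => by funext i; exact Fin.elim0 i⟩
  refine ⟨⟨⟨⟨⟨fun v => (0, v), fun x y => by simp⟩, fun c x => by simp⟩, fun p => p.2,
    fun x => rfl, fun p => ?_⟩, fun x => by simp⟩⟩
  exact Prod.ext (Subsingleton.elim _ _) rfl

lemma exists_QF {V : Type*} [AddCommGroup V] [Module K V] [FiniteDimensional K V]
    (q : QuadraticForm K V) : ∃ φ : QF K, q.Equivalent (toQ φ) := by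
  let b := Module.finBasis K V
  refine ⟨⟨Module.finrank K V, LinearMap.toMatrix₂ b b (q.toBilin b)⟩,
    ⟨⟨b.equivFun, fun x => ?_⟩⟩⟩
  unfold toQ Matrix.toQuadraticForm'
  conv_rhs => rw [← QuadraticMap.toQuadraticMap_toBilin q b]
  dsimp
  rw [Matrix.toLinearMap₂'_apply', apply_eq_dotProduct_toMatrix₂_mulVec b b]
  rfl

lemma hyp_succ (k : ℕ) : (hyp (k + 1) : QF K) = orthSum hypPlane (hyp k) := rfl

lemma eval_hypPlane (s : Fin 2 → K) : (hypPlane : QF K).eval s = s 0 * s 1 := by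
  unfold QF.eval hypPlane bin
  dsimp only
  simp [Fin.sum_univ_two]

/-- The diagonal form on `Fin n → K`. -/
noncomputable def dQ {n : ℕ} (b : Fin n → K) : QuadraticForm K (Fin n → K) := toQ (diag b)

lemma dQ_apply {n : ℕ} (b : Fin n → K) (x : Fin n → K) : dQ b x = ∑ i, b i * x i ^ 2 :=
  (toQ_apply (diag b) x).trans (eval_diag b x)

/-- The hyperbolic plane on `Fin 2 → K`. -/
noncomputable def hQ (K : Type*) [Field K] : QuadraticForm K (Fin 2 → K) :=
  toQ (hypPlane : QF K)

lemma hQ_apply (s : Fin 2 → K) : hQ K s = s 0 * s 1 :=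
  (toQ_apply (hypPlane : QF K) s).trans (eval_hypPlane s)

end

section
universe u
variable {K : Type u} [Field K] [CharP K 2]

open QuadraticMap in
lemma split_plane {V W : Type*} [AddCommGroup V] [Module K V] [AddCommGroup W] [Module K W]
    (q : QuadraticForm K V) (D : QuadraticForm K W)
    (hpol : ∀ x y, polar D x y = 0) (v u : V) (w : W)
    (hvw : q v + D w = 0) (hvu : polar q v u = 1) (V' : Submodule K V)
    (hV' : ∀ x, x ∈ V' ↔ polar q v x = 0 ∧ polar q u x = 0) :
    (((hQ K).prod ((q.comp V'.subtype).prod D)).Equivalent (q.prod D)) := by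
  have h2 : (2 : K) = 0 := CharTwo.two_eq_zero
  have hneg : ∀ x : K, -x = x := fun x => CharTwo.neg_eq x
  have hDadd : ∀ x y, D (x + y) = D x + D y := fun x y => by
    rw [QuadraticMap.map_add D, hpol, add_zero]
  have hvv : ∀ x, polar q x x = 0 := fun x => by
    rw [polar_self]; simp [h2]
  have huv : polar q u v = 1 := by rw [polar_comm]; exact hvu
  let T : ((Fin 2 → K) × (V' × W)) →ₗ[K] V × W :=
    { toFun := fun p => ((p.1 0 + q u * p.1 1) • v + p.1 1 • u + (p.2.1 : V),
        p.2.2 + (p.1 0 + q u * p.1 1) • w)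
      map_add' := fun p p' => by
        ext
        · simp; module
        · simp; module
      map_smul' := fun c p => by
        ext
        · simp; module
        · simp; module }
  have hT : Function.Bijective T := by
    constructor
    · rw [← LinearMap.ker_eq_bot, LinearMap.ker_eq_bot']
      rintro ⟨s, x, y⟩ h
      have h1 : (s 0 + q u * s 1) • v + s 1 • u + (x : V) = 0 := congrArg Prod.fst h
      have h3 : y + (s 0 + q u * s 1) • w = 0 := congrArg Prod.snd h
      have hx := (hV' x).1 x.2
      have e1 := congrArg (polar q v) h1
      have e2 := congrArg (polar q u) h1
      simp only [polar_add_right, polar_smul_right, hvv, hvu, huv, hx.1, hx.2, polar_zero_right,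
        smul_eq_mul, mul_zero, mul_one, add_zero, zero_add] at e1 e2
      rw [e1] at e2 h1 h3
      simp only [mul_zero, add_zero] at e2 h1 h3
      rw [e2] at h1 h3
      simp only [zero_smul, zero_add, add_zero] at h1 h3
      refine Prod.ext ?_ (Prod.ext (Subtype.ext h1) h3)
      funext i
      fin_cases i
      · exact e2
      · exact e1
    · rintro ⟨x, y⟩
      have hm : x - polar q u x • v - polar q v x • u ∈ V' := by
        rw [hV']
        constructor
        · simp only [polar_sub_right, polar_smul_right, hvv, hvu, huv, smul_eq_mul]; ring
        · simp only [polar_sub_right, polar_smul_right, hvv, hvu, huv, smul_eq_mul]; ring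
      refine ⟨(![polar q u x - q u * polar q v x, polar q v x], ⟨_, hm⟩, y - polar q u x • w), ?_⟩
      ext
      · simp [T]
      · simp [T]
  refine ⟨⟨LinearEquiv.ofBijective T hT, ?_⟩⟩
  rintro ⟨s, x, y⟩
  have hx := (hV' x).1 x.2
  change (q.prod D) ((s 0 + q u * s 1) • v + s 1 • u + (x : V), y + (s 0 + q u * s 1) • w) = _
  have hxv : polar q v x = 0 := hx.1
  simp only [prod_apply, hQ_apply, QuadraticMap.comp_apply, hDadd, QuadraticMap.map_smul]
  rw [QuadraticMap.map_add q, QuadraticMap.map_add q, polar_add_left, polar_smul_left, polar_smul_left,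
    polar_smul_left, polar_smul_right, hvu, hx.1, hx.2]
  simp only [QuadraticMap.map_smul, smul_eq_mul, Submodule.subtype_apply]
  have hD : D w = q v := by
    have := hvw
    rw [add_eq_zero_iff_eq_neg, hneg] at this
    exact this.symm
  rw [hD]
  linear_combination ((s 0 + q u * s 1)^2 * q v + q u * s 1 ^ 2) * h2

open QuadraticMap in
lemma witt (D : QF K) (hD : (toQ D).Anisotropic) (hpol : ∀ x y, polar (toQ D) x y = 0) (d : ℕ) :
    ∀ (V : Type u) [AddCommGroup V] [Module K V] [FiniteDimensional K V] (q : QuadraticForm K V),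
      Module.finrank K V = d → (∀ x, (∀ y, polar q x y = 0) → x = 0) →
      ∃ (φ : QF K) (k : ℕ), φ.Nonsingular ∧ QF.Anisotropic (φ.orthSum D) ∧
        (q.prod (toQ D)).Equivalent ((toQ (hyp k)).prod ((toQ φ).prod (toQ D))) := by
  induction d using Nat.strong_induction_on with
  | _ d ih =>
  intro V _ _ _ q hd hq
  by_cases ha : (q.prod (toQ D)).Anisotropic
  · obtain ⟨φ, hφ⟩ := exists_QF q
    refine ⟨φ, 0, ?_, ?_, ?_⟩
    · rw [nonsingular_iff]; exact nonsing_of_equiv hφ hq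
    · rw [anisotropic_iff]
      exact aniso_of_equiv ((prod_congr hφ (.refl _)).trans (orthSum_equiv _ _)) ha
    · exact (prod_congr hφ (.refl _)).trans (nil_prod _ _)
  · unfold QuadraticMap.Anisotropic at ha
    push Not at ha
    obtain ⟨⟨v, w⟩, hvw, hne⟩ := ha
    rw [prod_apply] at hvw
    have hv : v ≠ 0 := by
      rintro rfl
      have : w = 0 := hD w (by simpa using hvw)
      exact hne (by simp [this])
    obtain ⟨u0, hu0⟩ : ∃ u, polar q v u ≠ 0 := by
      by_contra hcon
      push Not at hcon
      exact hv (hq v hcon)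
    have hvu : polar q v ((polar q v u0)⁻¹ • u0) = 1 := by
      rw [polar_smul_right, smul_eq_mul, inv_mul_cancel₀ hu0]
    generalize (polar q v u0)⁻¹ • u0 = u at hvu
    let V' : Submodule K V := LinearMap.ker (q.polarBilin v) ⊓ LinearMap.ker (q.polarBilin u)
    have hV' : ∀ x, x ∈ V' ↔ polar q v x = 0 ∧ polar q u x = 0 := fun x => by
      simp [V', Submodule.mem_inf]
    have hlt : Module.finrank K V' < d := by
      rw [← hd]
      apply Submodule.finrank_lt
      intro h
      have : u ∈ V' := by rw [h]; trivial
      rw [hV', hvu] at this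
      exact one_ne_zero this.1
    have hns : ∀ x, (∀ y, polar (q.comp V'.subtype) x y = 0) → x = 0 := by
      intro x hx
      have hxm := (hV' x).1 x.2
      refine Subtype.ext (hq x fun y => ?_)
      have hvv : ∀ x, polar q x x = 0 := fun x => by
        rw [polar_self]; simp [CharTwo.two_eq_zero]
      have huv : polar q u v = 1 := by rw [polar_comm]; exact hvu
      have hm : y - polar q u y • v - polar q v y • u ∈ V' := by
        rw [hV']
        constructor
        · simp only [polar_sub_right, polar_smul_right, hvv, hvu, huv, smul_eq_mul]; ring
        · simp only [polar_sub_right, polar_smul_right, hvv, hvu, huv, smul_eq_mul]; ring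
      have h1 : polar q (x : V) (y - polar q u y • v - polar q v y • u) = 0 := hx ⟨_, hm⟩
      rw [polar_sub_right, polar_sub_right, polar_smul_right, polar_smul_right,
        polar_comm q x v, polar_comm q x u, hxm.1, hxm.2] at h1
      simpa using h1
    obtain ⟨φ, k, h1, h2, h3⟩ := ih _ hlt V' (q.comp V'.subtype) rfl hns
    refine ⟨φ, k + 1, h1, h2, ?_⟩
    have h4 := split_plane q (toQ D) hpol v u w hvw hvu V' hV'
    refine h4.symm.trans ((prod_congr (.refl _) h3).trans ?_)
    refine (prod_assoc _ _ _).symm.trans (prod_congr ?_ (.refl _))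
    rw [hyp_succ]
    exact orthSum_equiv _ _


lemma diag_add {n : ℕ} (b : Fin n → K) (x y : Fin n → K) :
    dQ b (x + y) = dQ b x + dQ b y := by
  rw [dQ_apply, dQ_apply, dQ_apply, ← Finset.sum_add_distrib]
  refine Finset.sum_congr rfl fun i _ => ?_
  rw [Pi.add_apply, CharTwo.add_sq, mul_add]

lemma diag_sum {n m : ℕ} (b : Fin n → K) (x : Fin m → Fin n → K) (c : Fin m → K) :
    dQ b (∑ i, c i • x i) = ∑ i, c i ^ 2 * dQ b (x i) := by
  let g : (Fin n → K) →+ K := ⟨⟨dQ b, QuadraticMap.map_zero _⟩, diag_add b⟩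
  have : g (∑ i, c i • x i) = ∑ i, g (c i • x i) := map_sum g _ _
  refine this.trans (Finset.sum_congr rfl fun i _ => ?_)
  change dQ b (c i • x i) = _
  rw [QuadraticMap.map_smul, smul_eq_mul, sq]

lemma diag_single {n : ℕ} (b : Fin n → K) (i : Fin n) :
    dQ b (Pi.single i 1) = b i := by
  rw [dQ_apply]
  simp [Pi.single_apply]

set_option maxHeartbeats 1000000 in
lemma diag_part {n : ℕ} (b : Fin n → K) : ∃ (r : ℕ) (f : Fin r → Fin n), StrictMono f ∧
    (dQ (b ∘ f)).Anisotropic ∧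
    ∃ l, (dQ b).Equivalent ((dQ (b ∘ f)).prod (dQ (fun _ : Fin l => (0 : K)))) := by
  classical
  let P : Finset (Fin n) → Prop := fun S =>
    ∀ x : Fin n → K, (∀ i ∉ S, x i = 0) → dQ b x = 0 → x = 0
  have hP0 : P ∅ := fun x hx _ => funext fun i => hx i (by simp)
  obtain ⟨S, hS⟩ := (Set.toFinite {S | P S}).exists_maximal ⟨∅, hP0⟩
  have hPS : P S := hS.1
  have hY : ∀ j ∉ S, ∃ y : Fin n → K, y j = 1 ∧ (∀ i ∉ insert j S, y i = 0) ∧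
      dQ b y = 0 := by
    intro j hj
    have hn : ¬ P (insert j S) := fun h =>
      hj (hS.2 h (Finset.subset_insert j S) (Finset.mem_insert_self j S))
    simp only [P] at hn
    push Not at hn
    obtain ⟨x, hx, hx0, hne⟩ := hn
    have hxj : x j ≠ 0 := fun h => hne (hPS x (fun i hi => by
      by_cases hij : i = j
      · rw [hij, h]
      · exact hx i (by simp [hij, hi])) hx0)
    refine ⟨(x j)⁻¹ • x, by simp [hxj], fun i hi => by simp [hx i hi], ?_⟩
    rw [QuadraticMap.map_smul, hx0, smul_zero]
  choose! Y hY1 hY2 hY3 using hY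
  let f := S.orderEmbOfFin rfl
  let g := Sᶜ.orderEmbOfFin rfl
  have hf : ∀ i, f i ∈ S := fun i => S.orderEmbOfFin_mem rfl i
  have hg : ∀ i, g i ∉ S := fun i => Finset.mem_compl.1 (Sᶜ.orderEmbOfFin_mem rfl i)
  have hval : ∀ s : Fin S.card → K, dQ (b ∘ f) s =
      dQ b (∑ i, s i • Pi.single (f i) (1 : K)) := by
    intro s
    rw [diag_sum, dQ_apply]
    refine Finset.sum_congr rfl fun i _ => ?_
    rw [diag_single, mul_comm]; rfl
  have hco : ∀ (s : Fin S.card → K) (i), (∑ i, s i • Pi.single (f i) (1 : K) : Fin n → K) (f i)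
      = s i := by
    intro s i
    rw [Finset.sum_apply, Finset.sum_eq_single i]
    · simp
    · intro j _ hj
      simp [Pi.single_apply, hj.symm]
    · simp
  have hco2 : ∀ (s : Fin S.card → K) (j), j ∉ S →
      (∑ i, s i • Pi.single (f i) (1 : K) : Fin n → K) j = 0 := by
    intro s j hj
    rw [Finset.sum_apply]
    refine Finset.sum_eq_zero fun i _ => ?_
    have : j ≠ f i := fun h => hj (h ▸ hf i)
    simp [Pi.single_apply, this]
  have hco3 : ∀ (t : Fin Sᶜ.card → K) (k), (∑ i, t i • Y (g i) : Fin n → K) (g k) = t k := by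
    intro t k
    rw [Finset.sum_apply, Finset.sum_eq_single k]
    · simp [hY1 _ (hg k)]
    · intro j _ hj
      have : g k ∉ insert (g j) S := by
        simp [hg k, hj.symm]
      simp [hY2 _ (hg j) _ this]
    · simp
  refine ⟨S.card, f, f.strictMono, ?_, Sᶜ.card, ?_⟩
  · intro s hs
    have h := hPS _ (hco2 s) ((hval s).symm.trans hs)
    funext i
    have := hco s i
    rw [h] at this
    exact this.symm
  · let T : ((Fin S.card → K) × (Fin Sᶜ.card → K)) →ₗ[K] (Fin n → K) :=
      { toFun := fun p => ∑ i, p.1 i • Pi.single (f i) (1 : K) + ∑ i, p.2 i • Y (g i)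
        map_add' := fun p p' => by
          simp only [Prod.fst_add, Prod.snd_add, Pi.add_apply, add_smul, Finset.sum_add_distrib]
          abel
        map_smul' := fun c p => by
          simp only [Prod.smul_fst, Prod.smul_snd, Pi.smul_apply, smul_add, Finset.smul_sum,
            smul_assoc, RingHom.id_apply] }
    have hinj : Function.Injective T := by
      rw [← LinearMap.ker_eq_bot, LinearMap.ker_eq_bot']
      rintro ⟨s, t⟩ h
      have h1 : (∑ i, s i • Pi.single (f i) (1 : K) + ∑ i, t i • Y (g i) : Fin n → K) = 0 := h
      have ht : t = 0 := by
        funext k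
        have := congrFun h1 (g k)
        rw [Pi.add_apply, hco2 s _ (hg k), hco3, zero_add] at this
        exact this
      subst ht
      have hs : s = 0 := by
        funext k
        have := congrFun h1 (f k)
        rw [Pi.add_apply, hco s] at this
        simpa using this
      rw [hs]; rfl
    have hrank : Module.finrank K ((Fin S.card → K) × (Fin Sᶜ.card → K)) =
        Module.finrank K (Fin n → K) := by
      simp [Finset.card_compl]
      have := S.card_le_univ
      simp at this
      omega
    refine QuadraticMap.Equivalent.symm
      ⟨⟨LinearEquiv.ofBijective T ⟨hinj,
        (LinearMap.injective_iff_surjective_of_finrank_eq_finrank hrank).1 hinj⟩, ?_⟩⟩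
    rintro ⟨s, t⟩
    have hT : (T (s, t)) = (∑ i, s i • Pi.single (f i) (1 : K) : Fin n → K) +
      (∑ i, t i • Y (g i) : Fin n → K) := rfl
    refine (congrArg (dQ b) hT).trans ?_
    rw [QuadraticMap.prod_apply]
    have h1 : dQ b (∑ i, t i • Y (g i)) = 0 := by
      rw [diag_sum b (fun i => Y (g i)) t]
      refine Finset.sum_eq_zero fun i _ => ?_
      rw [hY3 _ (hg i), mul_zero]
    have h2 : dQ (fun _ : Fin Sᶜ.card => (0 : K)) t = 0 := by
      rw [dQ_apply]
      simp only [zero_mul, Finset.sum_const_zero]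
    rw [diag_add, hval s, h1, h2]

end

lemma map_diag {F K : Type*} [Field F] [Field K] (g : F →+* K) {n : ℕ} (a : Fin n → F) :
    (diag a).map g = diag (g ∘ a) := by
  unfold QF.map diag
  congr 1
  funext i j
  by_cases h : i = j
  · subst h; simp
  · simp [Matrix.diagonal_apply_ne _ h]

lemma map_orthSum {F K : Type*} [Field F] [Field K] (g : F →+* K) (q q' : QF F) :
    (q.orthSum q').map g = (q.map g).orthSum (q'.map g) := by
  unfold QF.map orthSum
  dsimp only
  congr 1
  funext i j
  refine Fin.addCases (fun i => ?_) (fun i => ?_) i <;>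
  refine Fin.addCases (fun j => ?_) (fun j => ?_) j <;> simp <;> rfl

lemma map_nonsingular {F K : Type*} [Field F] [Field K] (g : F →+* K) (q : QF F)
    (h : q.Nonsingular) : (q.map g).Nonsingular := by
  have hdet : (q.c + q.c.transpose).det ≠ 0 := by
    intro h0
    obtain ⟨v, hv, hv0⟩ := Matrix.exists_mulVec_eq_zero_iff.2 h0
    exact hv (h v hv0)
  intro x hx
  have hm : (q.map g).c + (q.map g).c.transpose = (q.c + q.c.transpose).map g := by
    ext i j
    exact (map_add g _ _).symm
  have hdet' : ((q.map g).c + (q.map g).c.transpose).det ≠ 0 := by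
    rw [hm]
    intro h0
    apply hdet
    apply g.injective
    rw [map_zero, RingHom.map_det]
    exact h0
  exact Matrix.eq_zero_of_mulVec_eq_zero hdet' hx

end TSE

open QF in
/-- Let `q ≅ q_r ⊥ q_s` be a quadratic form over a field `F` of
characteristic 2 with `q_r` nonsingular and `q_s ≅ ⟨a₁,…,aₙ⟩` totally singular, not all
`aᵢ = 0`, and let `K/F` be any field extension.  Then there are `1 ≤ r` and indices
`i₁ < … < i_r` (given by a strictly monotone `f : Fin r → Fin n`) such that, with
`q_s' = ⟨a_{i₁},…,a_{i_r}⟩`, the form `(q_s')_K` is the anisotropic part of `(q_s)_K`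
and the anisotropic part of `q_K` is `φ ⊥ (q_s')_K` for some nonsingular form `φ`
over `K`.  In particular every field extension is excellent for totally singular
quadratic forms. -/
theorem totally_singular_excellence
    (F K : Type*) [Field F] [Field K] [Algebra F K] [CharP F 2]
    (qr : QF F) (hqr : qr.Nonsingular)
    (n : ℕ) (a : Fin n → F) (ha : ∃ i, a i ≠ 0) :
    ∃ (r : ℕ) (f : Fin r → Fin n), 1 ≤ r ∧ StrictMono f ∧
      AnisoPartOf ((diag (a ∘ f)).map (algebraMap F K)) ((diag a).map (algebraMap F K)) ∧
      ∃ φ : QF K, φ.Nonsingular ∧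
        AnisoPartOf (φ.orthSum ((diag (a ∘ f)).map (algebraMap F K)))
          ((qr.orthSum (diag a)).map (algebraMap F K)) := by
  have : CharP K 2 := charP_of_injective_algebraMap (algebraMap F K).injective 2
  obtain ⟨r, f, hf, haniso, l, hl⟩ := TSE.diag_part (algebraMap F K ∘ a)
  change (TSE.toQ (diag ((algebraMap F K ∘ a) ∘ f))).Anisotropic at haniso
  have hpol : ∀ x y, QuadraticMap.polar (TSE.toQ (diag ((algebraMap F K ∘ a) ∘ f))) x y = 0 := by
    intro x y
    unfold QuadraticMap.polar
    have h := TSE.diag_add ((algebraMap F K ∘ a) ∘ f) x y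
    rw [sub_sub, sub_eq_zero]
    exact h
  obtain ⟨φ, k, h1, h2, h3⟩ := TSE.witt _ haniso hpol _ _ (TSE.toQ (qr.map (algebraMap F K))) rfl
    ((TSE.nonsingular_iff _).1 (TSE.map_nonsingular _ qr hqr))
  have e1 : (diag (a ∘ f)).map (algebraMap F K) = diag ((algebraMap F K ∘ a) ∘ f) :=
    TSE.map_diag _ _
  refine ⟨r, f, ?_, hf, ?_, φ, h1, ?_⟩
  · by_contra hr
    obtain rfl : r = 0 := by omega
    obtain ⟨i, hi⟩ := ha
    obtain ⟨e⟩ := hl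
    apply hi
    apply (algebraMap F K).injective
    rw [map_zero]
    have h4 := TSE.diag_single (algebraMap F K ∘ a) i
    refine h4.symm.trans ?_
    rw [← e.map_app, QuadraticMap.prod_apply, TSE.dQ_apply, TSE.dQ_apply]
    simp
  · change (TSE.toQ (diag (algebraMap F K ∘ a))).Equivalent
      ((TSE.toQ (diag ((algebraMap F K ∘ a) ∘ f))).prod (TSE.toQ (zeros l))) at hl
    rw [e1, TSE.map_diag]
    refine ⟨(TSE.anisotropic_iff _).2 haniso, 0, l, (TSE.isometric_iff _ _).2 ?_⟩
    refine hl.trans ((TSE.orthSum_equiv _ _).trans ((TSE.nil_prod _ _).trans (TSE.orthSum_equiv _ _)))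
  · change (TSE.toQ (diag (algebraMap F K ∘ a))).Equivalent
      ((TSE.toQ (diag ((algebraMap F K ∘ a) ∘ f))).prod (TSE.toQ (zeros l))) at hl
    rw [e1, TSE.map_orthSum, TSE.map_diag]
    refine ⟨h2, k, l, (TSE.isometric_iff _ _).2 ?_⟩
    refine (TSE.orthSum_equiv _ _).symm.trans ?_
    refine (TSE.prod_congr (.refl _) hl).trans ((TSE.prod_assoc _ _ _).symm.trans ?_)
    refine (TSE.prod_congr h3 (.refl _)).trans ((TSE.prod_assoc _ _ _).trans ?_)
    refine QuadraticMap.Equivalent.trans (TSE.prod_congr (.refl _) ?_) (TSE.orthSum_equiv _ _)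
    exact (TSE.prod_congr (TSE.orthSum_equiv _ _) (.refl _)).trans (TSE.orthSum_equiv _ _)
end
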